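/- arXiv:1811.03591 — 3 statements merged into one kernel-verified Lean document; each statement's English description precedes it below -/
import Mathlib

section
/- There exist a constant C > 0 and ε₀ ∈ (0,1) such that for every ε ∈ (0, ε₀) the following holds. Let X ⊆ ℝ be an arbitrary set and f : X → ℝ a map such that (1 − ε)|x₁ − x₂| ≤ |f(x₁) − f(x₂)| ≤ (1 + ε)|x₁ − x₂| for all x₁, x₂ ∈ X. Then there exists a map h : ℝ → ℝ² such that h(x) = (f(x), 0) for every x ∈ X, and (1 − C/log²(1/ε))·|u − v| ≤ ‖h(u) − h(v)‖ ≤ (1 + C/log²(1/ε))·|u − v| for all u, v ∈ ℝ. -/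
/-!
A pair of points of `X` with difference quotient near `1` or near `-1` is recorded in the upper
half-plane, above the pair and at height comparable to its length. Two pairs of opposite type that
are close in place and comparable in scale would contradict the near-isometry, and quantitatively
the two recorded regions are at hyperbolic distance at least `log (1 / ε) / 2`. Hence there is an
angle `G` on the half-plane, `0` on one region and `π` on the other, whose Lipschitz constant `K`
is of order `1 / log (1 / ε)`. With `a` a point of `X` nearest to `u`, put
`H u = f a + l * (u - a) * exp (i * G (u, |u - a|))`, where `l` is the stretch of `f` over the gap
of `X` containing `u`. The path from `u` to `v` through their nearest points is thus mapped to
steps whose directions differ by angles of order `K`, so the length of their sum is off by a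
relative error of order `K ^ 2 + ε` only: cosines are quadratically close to `1`, and transversal
components enter the norm through their squares.
-/

open Metric Set UpperHalfPlane
open scoped NNReal

variable {ε : ℝ}

section NearIsometry

variable {α β γ : Type*} [PseudoMetricSpace α] [PseudoMetricSpace β] [PseudoMetricSpace γ]

/-- `f` distorts every distance between points of `X` by a relative error of at most `ε`. -/
def IsNearIsometryOn (ε : ℝ) (f : α → β) (X : Set α) : Prop :=
  ∀ x ∈ X, ∀ y ∈ X, |dist (f x) (f y) - dist x y| ≤ ε * dist x y

lemma isNearIsometryOn_iff {f : α → β} {X : Set α} :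
    IsNearIsometryOn ε f X ↔ ∀ x ∈ X, ∀ y ∈ X,
      (1 - ε) * dist x y ≤ dist (f x) (f y) ∧ dist (f x) (f y) ≤ (1 + ε) * dist x y := by
  refine forall₄_congr fun x _ y _ ↦ ?_
  rw [abs_le]
  constructor <;> rintro ⟨h₁, h₂⟩ <;> constructor <;> linarith

namespace IsNearIsometryOn

lemma mono {δ : ℝ} {f : α → β} {X : Set α} (hf : IsNearIsometryOn ε f X) (h : ε ≤ δ) :
    IsNearIsometryOn δ f X :=
  fun x hx y hy ↦ (hf x hx y hy).trans (by gcongr)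

lemma congr {f g : α → β} {X : Set α} (hf : IsNearIsometryOn ε f X) (h : EqOn f g X) :
    IsNearIsometryOn ε g X := fun x hx y hy ↦ by
  rw [← h hx, ← h hy]
  exact hf x hx y hy

lemma isometry_comp {e : β → γ} {f : α → β} {X : Set α} (he : Isometry e)
    (hf : IsNearIsometryOn ε f X) : IsNearIsometryOn ε (e ∘ f) X := fun x hx y hy ↦ by
  simpa only [Function.comp_apply, he.dist_eq] using hf x hx y hy

lemma lipschitzOnWith {f : α → β} {X : Set α} (hf : IsNearIsometryOn ε f X) :
    LipschitzOnWith (1 + ε).toNNReal f X :=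
  .of_dist_le_mul fun x hx y hy ↦ (isNearIsometryOn_iff.1 hf x hx y hy).2.trans <| by
    gcongr
    exact Real.le_coe_toNNReal _

lemma on_closure {f : α → β} {X : Set α} (hf : IsNearIsometryOn ε f X) (hc : Continuous f) :
    IsNearIsometryOn ε f (closure X) := by
  have hsub : closure (X ×ˢ X) ⊆
      {p : α × α | |dist (f p.1) (f p.2) - dist p.1 p.2| ≤ ε * dist p.1 p.2} :=
    closure_minimal (fun p hp ↦ hf p.1 hp.1 p.2 hp.2) (isClosed_le (by fun_prop) (by fun_prop))
  rw [closure_prod_eq] at hsub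
  exact fun x hx y hy ↦ hsub (mk_mem_prod hx hy)

lemma exists_eqOn_closure {f : α → ℝ} {X : Set α} (hf : IsNearIsometryOn ε f X) :
    ∃ g : α → ℝ, EqOn f g X ∧ IsNearIsometryOn ε g (closure X) := by
  obtain ⟨g, hg, hfg⟩ := hf.lipschitzOnWith.extend_real
  exact ⟨g, hfg, (hf.congr hfg).on_closure hg.continuous⟩

end IsNearIsometryOn

end NearIsometry

section Slopes

variable {f : ℝ → ℝ} {X : Set ℝ}

namespace IsNearIsometryOn

lemma abs_abs_slope_sub_one_le (hf : IsNearIsometryOn ε f X) {x y : ℝ} (hx : x ∈ X) (hy : y ∈ X)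
    (hxy : x ≠ y) : |(|slope f x y|) - 1| ≤ ε := by
  have hpos : 0 < |y - x| := abs_pos.2 (sub_ne_zero.2 hxy.symm)
  have h := hf y hy x hx
  rwa [slope_def_field, abs_div, div_sub_one hpos.ne', abs_div, abs_abs, div_le_iff₀ hpos]

lemma abs_abs_slope_mul_sub_le (hf : IsNearIsometryOn ε f X) {x y : ℝ} (hx : x ∈ X)
    (hy : y ∈ X) :
    |(|slope f x y|) * (x - y) - (x - y)| ≤ ε * |x - y| := by
  rcases eq_or_ne x y with rfl | hxy
  · simp
  rw [← sub_one_mul, abs_mul]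
  gcongr
  exact hf.abs_abs_slope_sub_one_le hx hy hxy

lemma abs_sub_le_or_abs_sub_le (hf : IsNearIsometryOn ε f X) (hε : ε ≤ 1 / 2) {p q t : ℝ}
    (hp : p ∈ X) (hq : q ∈ X) (ht : t ∈ X) (hpq : 0 < slope f p q) (hpt : slope f p t < 0) :
    |q - p| ≤ 2 * ε * |t - p| ∨ |t - p| ≤ 2 * ε * |q - p| := by
  have hpq' : p ≠ q := by rintro rfl; simp at hpq
  have hpt' : p ≠ t := by rintro rfl; simp at hpt
  have hqt' : q ≠ t := by rintro rfl; exact hpq.not_gt hpt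
  have hs := abs_le.1 (hf.abs_abs_slope_sub_one_le hp hq hpq')
  have hs' := abs_le.1 (hf.abs_abs_slope_sub_one_le hp ht hpt')
  have hs'' := abs_le.1 (hf.abs_abs_slope_sub_one_le hq ht hqt')
  have hlin : (t - p) * (slope f q t - slope f p t) = (q - p) * (slope f q t - slope f p q) := by
    have h₁ := sub_smul_slope f p q
    have h₂ := sub_smul_slope f p t
    have h₃ := sub_smul_slope f q t
    simp only [smul_eq_mul, vsub_eq_sub] at h₁ h₂ h₃
    linear_combination h₁ - h₂ + h₃
  -- All slopes are close to `±1`: whatever the sign of the slope over `q, t`, one of the two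
  -- differences in `hlin` is about `2` and the other at most `2 * ε`.
  have habs := congrArg abs hlin
  rw [abs_mul, abs_mul] at habs
  rw [abs_of_pos hpq] at hs
  rw [abs_of_neg hpt] at hs'
  rcases le_or_gt 0 (slope f q t) with hqt | hqt
  · rw [abs_of_nonneg hqt] at hs''
    have hsmall : |slope f q t - slope f p q| ≤ 2 * ε := by rw [abs_le]; constructor <;> linarith
    have hlarge : 1 ≤ |slope f q t - slope f p t| := by rw [abs_of_pos] <;> linarith
    right
    nlinarith [abs_nonneg (t - p), abs_nonneg (q - p)]
  · rw [abs_of_neg hqt] at hs''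
    have hsmall : |slope f q t - slope f p t| ≤ 2 * ε := by rw [abs_le]; constructor <;> linarith
    have hlarge : 1 ≤ |slope f q t - slope f p q| := by rw [abs_of_neg] <;> linarith
    left
    nlinarith [abs_nonneg (t - p), abs_nonneg (q - p)]

lemma min_abs_sub_le (hf : IsNearIsometryOn ε f X) (hε : ε ≤ 1 / 2) {x y x' y' R : ℝ}
    (hx : x ∈ X) (hy : y ∈ X) (hx' : x' ∈ X) (hy' : y' ∈ X)
    (hxy : 0 < slope f x y) (hxy' : slope f x' y' < 0)
    (hR : |y - x| ≤ R) (hR' : |y' - x'| ≤ R) (hxR : |x' - x| ≤ R) (hyR : |y' - x| ≤ R) :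
    min |y - x| |y' - x'| ≤ 4 * ε * R := by
  have hxy_ne : x ≠ y := by rintro rfl; simp at hxy
  have hε0 : 0 ≤ ε := (abs_nonneg _).trans (hf.abs_abs_slope_sub_one_le hx hy hxy_ne)
  wlog hfar : |y' - x'| / 2 ≤ |x' - x| generalizing x' y'
  · rw [abs_sub_comm y' x'] at hR' hfar ⊢
    refine this hy' hx' (by rwa [slope_comm]) hR' hyR hxR ?_
    linarith [abs_sub_le x' x y', abs_sub_comm x y']
  have hR0 : 0 ≤ ε * R := mul_nonneg hε0 ((abs_nonneg _).trans hR)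
  have hscale {d : ℝ} (hd : d ≤ R) : ε * d ≤ ε * R := mul_le_mul_of_nonneg_left hd hε0
  have hne : x ≠ x' := by
    rintro rfl
    have hyx' : x ≠ y' := by rintro rfl; simp at hxy'
    rw [sub_self, abs_zero] at hfar
    linarith [abs_pos.2 (sub_ne_zero.2 hyx'.symm)]
  have hslope : slope f x x' ≠ 0 := fun h ↦ by
    have := abs_le.1 (hf.abs_abs_slope_sub_one_le hx hx' hne)
    rw [h, abs_zero] at this
    linarith
  rcases hslope.lt_or_gt with h | h
  · rcases hf.abs_sub_le_or_abs_sub_le hε hx hy hx' hxy h with h | h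
    · exact min_le_of_left_le (by linarith [hscale hxR])
    · exact min_le_of_right_le (by linarith [hscale hR])
  · rw [slope_comm] at h
    rw [abs_sub_comm x' x] at hfar hxR
    rcases hf.abs_sub_le_or_abs_sub_le hε hx' hx hy' h hxy' with h | h <;>
      exact min_le_of_right_le (by linarith [hscale hxR, hscale hR'])

end IsNearIsometryOn

end Slopes

section HalfPlane

variable {f : ℝ → ℝ} {X : Set ℝ}

/-- The points of the upper half-plane that see the pair `x, y` at its own scale: those above the
segment between them whose height is comparable to `|y - x|`. -/
def pairBox (x y : ℝ) : Set ℍ :=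
  {z | z.re ∈ uIcc x y ∧ |y - x| ≤ 4 * z.im ∧ z.im ≤ |y - x|}

lemma ofComplex_mem_pairBox_iff {x y p t : ℝ} (ht : 0 < t) :
    ofComplex ⟨p, t⟩ ∈ pairBox x y ↔ p ∈ uIcc x y ∧ |y - x| ≤ 4 * t ∧ t ≤ |y - x| := by
  rw [ofComplex_apply_of_im_pos ht]
  rfl

/-- The places and scales at which `f` has positive slope over some pair of points of `X`; for
negative slopes, take `-f`. -/
def increasingRegion (f : ℝ → ℝ) (X : Set ℝ) : Set ℍ :=
  {z | ∃ x ∈ X, ∃ y ∈ X, 0 < slope f x y ∧ z ∈ pairBox x y}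

lemma IsNearIsometryOn.one_le_mul_exp_dist (hf : IsNearIsometryOn ε f X) (hε : ε ≤ 1 / 2) {z w : ℍ}
    (hz : z ∈ increasingRegion f X) (hw : w ∈ increasingRegion (-f) X) :
    1 ≤ 40 * ε * Real.exp (dist z w) := by
  obtain ⟨x, hx, y, hy, hxy, hzre, hzl, hzu⟩ := hz
  obtain ⟨x', hx', y', hy', hxy', hwre, hwl, hwu⟩ := hw
  rw [slope_neg_fun, Pi.neg_apply, Pi.neg_apply, neg_pos] at hxy'
  have hzx := abs_sub_left_of_mem_uIcc hzre
  have hwx := abs_sub_left_of_mem_uIcc hwre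
  have hwy := abs_sub_right_of_mem_uIcc hwre
  have hzw := im_le_im_mul_exp_dist z w
  have hwz := im_le_im_mul_exp_dist w z
  have hre : |z.re - w.re| ≤ dist (z : ℂ) w := by
    simpa [Complex.dist_eq] using Complex.abs_re_le_norm ((z : ℂ) - w)
  have hdw := dist_coe_le z w
  have hdz := dist_coe_le w z
  rw [dist_comm w z] at hwz hdz
  rw [dist_comm (w : ℂ) z] at hdz
  have hE : 1 ≤ Real.exp (dist z w) := Real.one_le_exp dist_nonneg
  set E := Real.exp (dist z w)
  set m := min |y - x| |y' - x'| with hm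
  have hm0 : 0 < m := lt_min (by linarith [z.im_pos]) (by linarith [w.im_pos])
  have hmul {t : ℝ} (h : t ≤ E * |y - x|) (h' : t ≤ E * |y' - x'|) : t ≤ E * m := by
    rw [hm, mul_min_of_nonneg _ _ (by linarith)]
    exact le_min h h'
  have hzm : z.im ≤ E * m := hmul (by nlinarith [z.im_pos]) (by nlinarith)
  have hwm : w.im ≤ E * m := hmul (by nlinarith) (by nlinarith [w.im_pos])
  have hshift : |z.re - w.re| ≤ E * m := hmul (by nlinarith) (by nlinarith)
  have hdist {t : ℝ} (ht : |t - w.re| ≤ |y' - x'|) : |t - x| ≤ 10 * (E * m) := by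
    linarith [abs_sub_le t w.re x, abs_sub_le w.re z.re x, abs_sub_comm w.re z.re,
      mul_pos (zero_lt_one.trans_le hE) hm0]
  have hmin : m ≤ 4 * ε * (10 * (E * m)) :=
    hf.min_abs_sub_le hε hx hy hx' hy' hxy hxy' (by nlinarith) (by nlinarith)
      (hdist (by rwa [abs_sub_comm])) (hdist hwy)
  exact le_of_mul_le_mul_right (by linarith) hm0

lemma IsNearIsometryOn.half_log_le_dist (hf : IsNearIsometryOn ε f X) (hε0 : 0 < ε)
    (hε : ε ≤ 1 / 1600) {z w : ℍ} (hz : z ∈ increasingRegion f X)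
    (hw : w ∈ increasingRegion (-f) X) : Real.log (1 / ε) / 2 ≤ dist z w := by
  have hexp : 1 / ε ≤ Real.exp (2 * dist z w) := by
    have hsq : 1 ≤ (40 * ε * Real.exp (dist z w)) ^ 2 :=
      one_le_pow₀ (hf.one_le_mul_exp_dist (by linarith) hz hw)
    rw [two_mul, Real.exp_add, ← sq, div_le_iff₀ hε0]
    nlinarith [mul_pos hε0 (pow_pos (Real.exp_pos (dist z w)) 2)]
  have := (Real.log_le_iff_le_exp (by positivity)).2 hexp
  linarith

/-- `G` assigns an angle to every place and scale so that `exp (i G)` is the sign of the slope of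
`f` over every pair of points of `X` seen from there. -/
def IsDirectionField (f : ℝ → ℝ) (X : Set ℝ) (G : ℍ → ℝ) : Prop :=
  ∀ x ∈ X, ∀ y ∈ X, ∀ z ∈ pairBox x y,
    (slope f x y : ℂ) = |slope f x y| * Complex.exp (G z * Complex.I)

lemma exists_isDirectionField_lipschitzWith {δ : ℝ} (hδ : 0 < δ)
    (hsep : ∀ z ∈ increasingRegion f X, ∀ w ∈ increasingRegion (-f) X, δ ≤ dist z w) :
    ∃ G : ℍ → ℝ, IsDirectionField f X G ∧ LipschitzWith (Real.pi / δ).toNNReal G := by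
  refine ⟨fun z ↦ Real.pi * thickenedIndicator hδ (increasingRegion (-f) X) z, ?_, ?_⟩
  · intro x hx y hy z hz
    rcases lt_trichotomy (slope f x y) 0 with h | h | h
    · have hmem : z ∈ increasingRegion (-f) X :=
        ⟨x, hx, y, hy, by rwa [slope_neg_fun, Pi.neg_apply, Pi.neg_apply, neg_pos], hz⟩
      simp [thickenedIndicator_one hδ _ hmem, abs_of_neg h]
    · simp [h]
    · have hmem : z ∉ thickening δ (increasingRegion (-f) X) := fun hmem ↦ by
        obtain ⟨w, hw, hzw⟩ := mem_thickening_iff.1 hmem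
        exact (hsep z ⟨x, hx, y, hy, h, hz⟩ w hw).not_gt hzw
      simp [thickenedIndicator_zero hδ _ hmem, abs_of_pos h]
  · refine .of_dist_le_mul fun z w ↦ ?_
    have h := (lipschitzWith_thickenedIndicator hδ (increasingRegion (-f) X)).dist_le_mul z w
    rw [NNReal.coe_inv, Real.coe_toNNReal _ hδ.le, NNReal.dist_eq] at h
    rw [Real.coe_toNNReal _ (by positivity), Real.dist_eq, ← mul_sub, abs_mul,
      abs_of_pos Real.pi_pos, div_eq_mul_inv, mul_assoc]
    gcongr

lemma dist_ofComplex_le_abs_log_sub_add (x y : ℝ) {r s : ℝ} (hr : 0 < r) (hs : 0 < s) :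
    dist (ofComplex ⟨x, r⟩) (ofComplex ⟨y, s⟩) ≤ |Real.log r - Real.log s| + |x - y| / s := by
  have hvert : dist (⟨⟨x, r⟩, hr⟩ : ℍ) ⟨⟨x, s⟩, hs⟩ = |Real.log r - Real.log s| :=
    dist_of_re_eq rfl
  have hhor : dist (⟨⟨x, s⟩, hs⟩ : ℍ) ⟨⟨y, s⟩, hs⟩ ≤ |x - y| / s := by
    refine (dist_le_dist_coe_div_sqrt _ _).trans_eq ?_
    change dist (⟨x, s⟩ : ℂ) ⟨y, s⟩ / √(s * s) = |x - y| / s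
    rw [Complex.dist_of_im_eq (by rfl), Real.dist_eq, Real.sqrt_mul_self hs.le]
  rw [ofComplex_apply_of_im_pos hr, ofComplex_apply_of_im_pos hs, ← hvert]
  exact (dist_triangle _ _ _).trans (by gcongr)

end HalfPlane

section Trigonometry

lemma abs_norm_sub_abs_le (z : ℂ) {τ : ℝ} (hτ : τ ≠ 0) :
    |‖z‖ - (|τ|)| ≤ |z.re - τ| + z.im ^ 2 / (2 * |τ|) := by
  have : 0 < |τ| := abs_pos.2 hτ
  have hre : |(|z.re| - |τ|)| ≤ |z.re - τ| := abs_abs_sub_abs_le _ _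
  set b := z.im ^ 2 / (2 * |τ|) with hb
  have hb0 : 0 ≤ b := by positivity
  have him : z.im ^ 2 = 2 * |τ| * b := by rw [hb]; field_simp
  rw [abs_le] at hre ⊢
  refine ⟨by linarith [Complex.abs_re_le_norm z], ?_⟩
  rw [sub_le_iff_le_add', ← abs_of_nonneg (by positivity : 0 ≤ |τ| + (|z.re - τ| + b)),
    ← abs_norm, ← sq_le_sq, Complex.sq_norm, Complex.normSq_apply, ← sq, ← sq, him]
  calc z.re ^ 2 + 2 * |τ| * b = |z.re| ^ 2 + 2 * |τ| * b := by rw [sq_abs]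
    _ ≤ (|τ| + |z.re - τ|) ^ 2 + 2 * |τ| * b := by gcongr; linarith
    _ ≤ (|τ| + (|z.re - τ| + b)) ^ 2 := by nlinarith [abs_nonneg (z.re - τ)]

/-- Rotating by `-θ₀` makes all terms nearly real: their real parts lose a factor quadratic in the
angles, and their imaginary parts enter the norm only through their square. -/
lemma abs_norm_sum_mul_exp_sub_abs_le {ι : Type*} (s : Finset ι) (r θ : ι → ℝ) (θ₀ : ℝ) {τ : ℝ}
    (hτ : τ ≠ 0) :
    |‖∑ j ∈ s, (r j : ℂ) * Complex.exp (θ j * Complex.I)‖ - (|τ|)| ≤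
      |∑ j ∈ s, r j - τ| + (∑ j ∈ s, |r j| * (θ j - θ₀) ^ 2) / 2 +
        (∑ j ∈ s, |r j| * |θ j - θ₀|) ^ 2 / (2 * |τ|) := by
  set w : ℂ := ∑ j ∈ s, (r j : ℂ) * Complex.exp ((θ j - θ₀ : ℝ) * Complex.I) with hw
  have hrot : ‖∑ j ∈ s, (r j : ℂ) * Complex.exp (θ j * Complex.I)‖ = ‖w‖ := by
    have : ∑ j ∈ s, (r j : ℂ) * Complex.exp (θ j * Complex.I) =
        Complex.exp (θ₀ * Complex.I) * w := by
      rw [hw, Finset.mul_sum]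
      refine Finset.sum_congr rfl fun j _ ↦ ?_
      rw [mul_left_comm, ← Complex.exp_add]
      push_cast
      ring_nf
    rw [this, norm_mul, Complex.norm_exp_ofReal_mul_I, one_mul]
  have hre : |w.re - τ| ≤ |∑ j ∈ s, r j - τ| + (∑ j ∈ s, |r j| * (θ j - θ₀) ^ 2) / 2 := by
    have hcos : |w.re - ∑ j ∈ s, r j| ≤ (∑ j ∈ s, |r j| * (θ j - θ₀) ^ 2) / 2 := by
      rw [hw, Complex.re_sum, ← Finset.sum_sub_distrib, Finset.sum_div]
      refine (Finset.abs_sum_le_sum_abs _ _).trans (Finset.sum_le_sum fun j _ ↦ ?_)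
      rw [Complex.re_ofReal_mul, Complex.exp_ofReal_mul_I_re, ← mul_sub_one, abs_mul, mul_div_assoc,
        abs_sub_comm, abs_of_nonneg (sub_nonneg.2 (Real.cos_le_one _))]
      gcongr
      linarith [Real.one_sub_sq_div_two_le_cos (x := θ j - θ₀)]
    linarith [abs_sub_le w.re (∑ j ∈ s, r j) τ]
  have him : |w.im| ≤ ∑ j ∈ s, |r j| * |θ j - θ₀| := by
    rw [hw, Complex.im_sum]
    refine (Finset.abs_sum_le_sum_abs _ _).trans (Finset.sum_le_sum fun j _ ↦ ?_)
    rw [Complex.im_ofReal_mul, Complex.exp_ofReal_mul_I_im, abs_mul]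
    exact mul_le_mul_of_nonneg_left Real.abs_sin_le_abs (abs_nonneg _)
  calc |‖∑ j ∈ s, (r j : ℂ) * Complex.exp (θ j * Complex.I)‖ - (|τ|)|
      ≤ |w.re - τ| + |w.im| ^ 2 / (2 * |τ|) := by
        rw [hrot, sq_abs]
        exact abs_norm_sub_abs_le w hτ
    _ ≤ _ := by gcongr

lemma abs_norm_sum_mul_exp_sub_abs_le_of_forall_le {ι : Type*} {s : Finset ι} {r θ : ι → ℝ}
    {θ₀ τ A B δ : ℝ} (hτ : τ ≠ 0) (hsum : |∑ j ∈ s, r j - τ| ≤ δ * |τ|)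
    (hterm : ∀ j ∈ s, |r j| * |θ j - θ₀| ≤ A * |τ| ∧ |r j| * (θ j - θ₀) ^ 2 ≤ B * |τ|) :
    |‖∑ j ∈ s, (r j : ℂ) * Complex.exp (θ j * Complex.I)‖ - (|τ|)| ≤
      (δ + s.card * B / 2 + (s.card * A) ^ 2 / 2) * |τ| := by
  have : 0 < |τ| := abs_pos.2 hτ
  have hA := Finset.sum_le_card_nsmul _ _ _ fun j hj ↦ (hterm j hj).1
  have hB := Finset.sum_le_card_nsmul _ _ _ fun j hj ↦ (hterm j hj).2
  rw [nsmul_eq_mul] at hA hB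
  calc _ ≤ |∑ j ∈ s, r j - τ| + (∑ j ∈ s, |r j| * (θ j - θ₀) ^ 2) / 2 +
        (∑ j ∈ s, |r j| * |θ j - θ₀|) ^ 2 / (2 * |τ|) :=
        abs_norm_sum_mul_exp_sub_abs_le s r θ θ₀ hτ
    _ ≤ δ * |τ| + s.card * (B * |τ|) / 2 + (s.card * (A * |τ|)) ^ 2 / (2 * |τ|) := by gcongr
    _ = _ := by field_simp

end Trigonometry

section Logarithm

lemma log_le_two_mul_sqrt {x : ℝ} (hx : 0 ≤ x) : Real.log x ≤ 2 * √x := by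
  linarith [Real.log_le_self (Real.sqrt_nonneg x), Real.log_sqrt hx]

lemma mul_sq_abs_log_add_le {x c : ℝ} (hx : 0 < x) (hc : 0 ≤ c) :
    x * (|Real.log x| + c) ^ 2 ≤ (2 * x + 2 + c * √x) ^ 2 := by
  have hs : 0 < √x := Real.sqrt_pos.2 hx
  have hlog : |Real.log x| ≤ 2 * √x + 2 * (√x)⁻¹ := by
    have hinv := log_le_two_mul_sqrt (inv_nonneg.2 hx.le)
    rw [Real.log_inv, Real.sqrt_inv] at hinv
    rw [abs_le]
    constructor <;> linarith [log_le_two_mul_sqrt hx.le, inv_pos.2 hs]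
  calc x * (|Real.log x| + c) ^ 2 = (√x * (|Real.log x| + c)) ^ 2 := by
        rw [mul_pow, Real.sq_sqrt hx.le]
    _ ≤ (√x * (2 * √x + 2 * (√x)⁻¹ + c)) ^ 2 := by gcongr
    _ = (2 * √x ^ 2 + 2 + c * √x) ^ 2 := by field_simp
    _ = (2 * x + 2 + c * √x) ^ 2 := by rw [Real.sq_sqrt hx.le]

lemma le_sq_two_pi_div_log (hε0 : 0 < ε) (hε : ε < 1) :
    ε ≤ (2 * Real.pi / Real.log (1 / ε)) ^ 2 := by
  have hlog : 0 < Real.log (1 / ε) := Real.log_pos (by rwa [one_lt_div hε0])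
  rw [div_pow, le_div_iff₀ (by positivity)]
  calc ε * Real.log (1 / ε) ^ 2 ≤ ε * (2 * √(1 / ε)) ^ 2 := by
        gcongr
        exact log_le_two_mul_sqrt (by positivity)
    _ = 4 := by rw [mul_pow, Real.sq_sqrt (by positivity)]; field_simp; norm_num
    _ ≤ (2 * Real.pi) ^ 2 := by nlinarith [Real.pi_gt_three]

lemma mul_abs_le_and_mul_sq_le {K T t r φ : ℝ} (hK : 0 ≤ K) (hT : 0 < T) (ht0 : 0 ≤ t)
    (ht : t ≤ 6 * T) (hr : |r| ≤ 2 * t)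
    (hφ : 0 < t → |φ| ≤ K * (|Real.log t - Real.log T| + 2)) :
    |r| * |φ| ≤ 800 * K * T ∧ |r| * φ ^ 2 ≤ 800 * K ^ 2 * T := by
  rcases ht0.eq_or_lt with rfl | ht0
  · rw [abs_nonpos_iff.1 (hr.trans_eq (mul_zero 2))]
    simp only [abs_zero, zero_mul]
    constructor <;> positivity
  specialize hφ ht0
  rw [← Real.log_div ht0.ne' hT.ne'] at hφ
  set L := |Real.log (t / T)| + 2
  have hL : 1 ≤ L := by linarith [abs_nonneg (Real.log (t / T))]
  have hquad : t * L ^ 2 ≤ 400 * T := by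
    have hx : t / T ≤ 6 := by rwa [div_le_iff₀ hT]
    have hsqrt : √(t / T) ≤ 5 / 2 := Real.sqrt_le_iff.2 ⟨by norm_num, by linarith⟩
    have := calc t / T * L ^ 2 ≤ (2 * (t / T) + 2 + 2 * √(t / T)) ^ 2 :=
          mul_sq_abs_log_add_le (by positivity) zero_le_two
      _ ≤ (2 * 6 + 2 + 2 * (5 / 2)) ^ 2 := by gcongr
      _ ≤ 400 := by norm_num
    rwa [div_mul_eq_mul_div, div_le_iff₀ hT] at this
  have hlin : t * L ≤ 400 * T := hquad.trans' (by gcongr; exact le_self_pow₀ hL two_ne_zero)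
  constructor
  · calc |r| * |φ| ≤ 2 * t * (K * L) := by gcongr
      _ = 2 * K * (t * L) := by ring
      _ ≤ 2 * K * (400 * T) := by gcongr
      _ = _ := by ring
  · calc |r| * φ ^ 2 = |r| * |φ| ^ 2 := by rw [sq_abs]
      _ ≤ 2 * t * (K * L) ^ 2 := by gcongr
      _ = 2 * K ^ 2 * (t * L ^ 2) := by ring
      _ ≤ 2 * K ^ 2 * (400 * T) := by gcongr
      _ = _ := by ring

end Logarithm

section NearestPoint

section Metric

variable {α : Type*} [PseudoMetricSpace α]

open Classical in
/-- A point of `X` at minimal distance from `u`, with junk value `u` if there is none. -/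
noncomputable def nearestPoint (X : Set α) (u : α) : α :=
  if h : ∃ a ∈ X, infDist u X = dist u a then h.choose else u

lemma nearestPoint_spec [ProperSpace α] {X : Set α} (hX : IsClosed X) (hne : X.Nonempty) (u : α) :
    nearestPoint X u ∈ X ∧ infDist u X = dist u (nearestPoint X u) := by
  have h := hX.exists_infDist_eq_dist hne u
  rw [nearestPoint, dif_pos h]
  exact h.choose_spec

end Metric

lemma nearestPoint_of_mem {α : Type*} [MetricSpace α] {X : Set α} {u : α} (hu : u ∈ X) :
    nearestPoint X u = u := by
  have h : ∃ a ∈ X, infDist u X = dist u a := ⟨u, hu, by rw [infDist_zero_of_mem hu, dist_self]⟩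
  rw [nearestPoint, dif_pos h, eq_comm, ← dist_eq_zero, ← h.choose_spec.2, infDist_zero_of_mem hu]

lemma Ioo_nearestPoint_subset_compl {X : Set ℝ} (hX : IsClosed X) (hne : X.Nonempty) {u v : ℝ}
    (huv : u < v) (hgap : Icc u v ⊆ Xᶜ) (h : nearestPoint X u ≠ nearestPoint X v) :
    nearestPoint X u < u ∧ v < nearestPoint X v ∧
      Ioo (nearestPoint X u) (nearestPoint X v) ⊆ Xᶜ := by
  obtain ⟨ha, hua⟩ := nearestPoint_spec hX hne u
  obtain ⟨hb, hvb⟩ := nearestPoint_spec hX hne v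
  set a := nearestPoint X u
  set b := nearestPoint X v
  have hu : ∀ x ∈ X, |u - a| ≤ |u - x| := fun x hx ↦ hua.symm.trans_le (infDist_le_dist_of_mem hx)
  have hv : ∀ x ∈ X, |v - b| ≤ |v - x| := fun x hx ↦ hvb.symm.trans_le (infDist_le_dist_of_mem hx)
  have hout : ∀ x ∈ X, x < u ∨ v < x := fun x hx ↦ by
    by_contra! hx'
    exact hgap hx' hx
  have hub := hu b hb
  have hva := hv a ha
  have hau : a < u := by grind
  have hvb : v < b := by grind
  exact ⟨hau, hvb, fun x hx hxX ↦ by grind⟩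

end NearestPoint

section GapStretch

variable {f : ℝ → ℝ} {X : Set ℝ} {u v : ℝ}

open Classical in
/-- The factor by which `f` stretches the gap of `X` containing `u`, and `1` outside of gaps. On an
unbounded gap, where `sInf` or `sSup` is `0` by convention, the value is `1` or the factor for some
other pair of points of `X`. -/
noncomputable def gapStretch (f : ℝ → ℝ) (X : Set ℝ) (u : ℝ) : ℝ :=
  let C := ordConnectedComponent Xᶜ u
  if (sInf C, sSup C) ∈ X.offDiag then |slope f (sInf C) (sSup C)| else 1

lemma IsNearIsometryOn.abs_gapStretch_sub_one_le (hf : IsNearIsometryOn ε f X) (hε : 0 ≤ ε)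
    (u : ℝ) : |gapStretch f X u - 1| ≤ ε := by
  rw [gapStretch]
  split_ifs with h
  · exact hf.abs_abs_slope_sub_one_le h.1 h.2.1 h.2.2
  · simpa using hε

lemma gapStretch_eq_of_uIcc_subset (h : uIcc u v ⊆ Xᶜ) : gapStretch f X u = gapStretch f X v := by
  rw [gapStretch, gapStretch, ordConnectedComponent_eq h]

lemma gapStretch_eq_abs_slope {a b : ℝ} (ha : a ∈ X) (hb : b ∈ X) (hgap : Ioo a b ⊆ Xᶜ)
    (hu : u ∈ Ioo a b) : gapStretch f X u = |slope f a b| := by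
  have hab : a < b := hu.1.trans hu.2
  have hC : ordConnectedComponent Xᶜ u = Ioo a b := by
    refine Subset.antisymm (fun y hy ↦ ?_)
      fun y hy ↦ (ordConnected_Ioo.uIcc_subset hu hy).trans hgap
    rw [mem_ordConnectedComponent] at hy
    by_contra! hyab
    rw [mem_Ioo, not_and_or, not_lt, not_lt] at hyab
    rcases hyab with h | h
    · exact hy (mem_uIcc_of_ge h hu.1.le) ha
    · exact hy (mem_uIcc_of_le hu.2.le h) hb
  rw [gapStretch, hC, csInf_Ioo hab, csSup_Ioo hab, if_pos ⟨ha, hb, hab.ne⟩]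

end GapStretch

section OuterExtension

variable {f : ℝ → ℝ} {X : Set ℝ} {G : ℍ → ℝ} {K : ℝ≥0} {u v : ℝ}

/-- The point of the upper half-plane above `u` whose height is the distance of `u` to `X`. On `X`
itself the height is `0`, and `ofComplex` takes a junk value. -/
noncomputable def halfPlaneLift (X : Set ℝ) (u : ℝ) : ℍ := ofComplex ⟨u, infDist u X⟩

/-- The extension of `f : X → ℝ` to a map from the line to the plane, here `ℂ`: a point `u` is
placed relative to the image of its nearest point of `X`, at an angle prescribed by `G`. -/
noncomputable def outerExtension (f : ℝ → ℝ) (X : Set ℝ) (G : ℍ → ℝ) (u : ℝ) : ℂ :=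
  f (nearestPoint X u) + (gapStretch f X u * (u - nearestPoint X u) : ℝ) *
    Complex.exp (G (halfPlaneLift X u) * Complex.I)

lemma outerExtension_of_mem (hu : u ∈ X) : outerExtension f X G u = f u := by
  simp [outerExtension, nearestPoint_of_mem hu]

lemma IsDirectionField.sub_eq_mul_exp (hG : IsDirectionField f X G) {x y : ℝ} (hx : x ∈ X)
    (hy : y ∈ X) : (f x - f y : ℂ) =
      (|slope f x y| * (x - y) : ℝ) * Complex.exp (G (ofComplex ⟨x, |x - y|⟩) * Complex.I) := by
  rcases eq_or_ne x y with rfl | hxy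
  · simp
  have hpos : 0 < |x - y| := abs_pos.2 (sub_ne_zero.2 hxy)
  have hmem : ofComplex ⟨x, |x - y|⟩ ∈ pairBox x y := by
    rw [ofComplex_mem_pairBox_iff hpos, abs_sub_comm y x]
    exact ⟨left_mem_uIcc, by linarith, le_rfl⟩
  have hslope : (x - y) * slope f x y = f x - f y := by
    rw [slope_comm]
    exact sub_smul_slope f y x
  have hcast : (f x - f y : ℂ) = (x - y) * slope f x y := mod_cast hslope.symm
  rw [hcast, hG x hx y hy _ hmem]
  push_cast
  ring

lemma abs_mul_abs_angle_sub_le_and_mul_sq_le (hG : LipschitzWith K G) {T x t r : ℝ}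
    (hT : 0 < T) (hx : |x - u| ≤ 2 * T) (ht0 : 0 ≤ t) (ht : t ≤ 6 * T) (hr : |r| ≤ 2 * t) :
    |r| * |G (ofComplex ⟨x, t⟩) - G (ofComplex ⟨u, T⟩)| ≤ 800 * K * T ∧
      |r| * (G (ofComplex ⟨x, t⟩) - G (ofComplex ⟨u, T⟩)) ^ 2 ≤ 800 * K ^ 2 * T := by
  refine mul_abs_le_and_mul_sq_le K.coe_nonneg hT ht0 ht hr fun ht0 ↦ ?_
  refine (hG.dist_le_mul _ _).trans ?_
  gcongr
  refine (dist_ofComplex_le_abs_log_sub_add x u ht0 hT).trans ?_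
  gcongr
  rwa [div_le_iff₀ hT]

lemma IsNearIsometryOn.abs_gapStretch_mul_sub_le (hf : IsNearIsometryOn ε f X) (hε : 0 ≤ ε)
    (u t : ℝ) : |gapStretch f X u * t - t| ≤ ε * |t| := by
  rw [← sub_one_mul, abs_mul]
  gcongr
  exact hf.abs_gapStretch_sub_one_le hε u

lemma abs_le_two_mul_abs_of_abs_sub_le {s t : ℝ} (hε : ε ≤ 1) (h : |s - t| ≤ ε * |t|) :
    |s| ≤ 2 * |t| := by
  linarith [abs_sub_abs_le_abs_sub s t, mul_le_mul_of_nonneg_right hε (abs_nonneg t)]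

/-- The signed lengths, after stretching by `f`, of the three steps of the path from `v` to `u`
through their nearest points of `X`. -/
noncomputable def pathLength (f : ℝ → ℝ) (X : Set ℝ) (u v : ℝ) : Fin 3 → ℝ :=
  ![gapStretch f X u * (u - nearestPoint X u),
    |slope f (nearestPoint X u) (nearestPoint X v)| * (nearestPoint X u - nearestPoint X v),
    gapStretch f X v * (nearestPoint X v - v)]

/-- The angles at which the three steps of `pathLength` are drawn by `outerExtension`. -/
noncomputable def pathAngle (X : Set ℝ) (G : ℍ → ℝ) (u v : ℝ) : Fin 3 → ℝ :=
  ![G (halfPlaneLift X u),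
    G (ofComplex ⟨nearestPoint X u, |nearestPoint X u - nearestPoint X v|⟩),
    G (halfPlaneLift X v)]

lemma outerExtension_sub_outerExtension (hX : IsClosed X) (hne : X.Nonempty)
    (hG : IsDirectionField f X G) (u v : ℝ) :
    outerExtension f X G u - outerExtension f X G v =
      ∑ j, (pathLength f X u v j : ℂ) * Complex.exp (pathAngle X G u v j * Complex.I) := by
  simp only [Fin.sum_univ_three, pathLength, pathAngle, Matrix.cons_val]
  rw [← hG.sub_eq_mul_exp (nearestPoint_spec hX hne u).1 (nearestPoint_spec hX hne v).1,
    outerExtension, outerExtension]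
  push_cast
  ring

lemma abs_path_steps_le (hX : IsClosed X) (hne : X.Nonempty) (hu : infDist u X ≤ 2 * |u - v|) :
    |u - nearestPoint X u| ≤ 2 * |u - v| ∧
      |nearestPoint X u - nearestPoint X v| ≤ 6 * |u - v| ∧
      |nearestPoint X v - v| ≤ 3 * |u - v| := by
  have hv := infDist_le_infDist_add_dist (s := X) (x := v) (y := u)
  rw [(nearestPoint_spec hX hne u).2, (nearestPoint_spec hX hne v).2, dist_comm v u, dist_comm v,
    Real.dist_eq, Real.dist_eq, Real.dist_eq] at hv
  rw [(nearestPoint_spec hX hne u).2, Real.dist_eq] at hu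
  set a := nearestPoint X u
  set c := nearestPoint X v
  have hac : |a - c| ≤ |u - a| + |u - v| + |c - v| := by
    linarith [abs_sub_le a u c, abs_sub_le u v c, abs_sub_comm a u, abs_sub_comm v c]
  exact ⟨hu, by linarith, by linarith⟩

lemma IsNearIsometryOn.abs_sum_pathLength_sub_le (hf : IsNearIsometryOn ε f X) (hε : 0 ≤ ε)
    (hX : IsClosed X) (hne : X.Nonempty) (hu : infDist u X ≤ 2 * |u - v|) :
    |∑ j, pathLength f X u v j - (u - v)| ≤ 11 * ε * |u - v| := by
  obtain ⟨hua, hac, hcv⟩ := abs_path_steps_le hX hne hu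
  simp only [Fin.sum_univ_three, pathLength, Matrix.cons_val]
  set a := nearestPoint X u with ha
  set c := nearestPoint X v with hc
  have h₁ := abs_le.1 (hf.abs_gapStretch_mul_sub_le hε u (u - a))
  have h₂ := abs_le.1
    (hf.abs_abs_slope_mul_sub_le (nearestPoint_spec hX hne u).1 (nearestPoint_spec hX hne v).1)
  have h₃ := abs_le.1 (hf.abs_gapStretch_mul_sub_le hε v (c - v))
  rw [← ha, ← hc] at h₂
  have htotal : ε * (|u - a| + |a - c| + |c - v|) ≤ ε * (11 * |u - v|) := by gcongr; linarith
  rw [abs_le]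
  constructor <;> linarith

lemma IsNearIsometryOn.abs_pathLength_mul_pathAngle_sub_le (hf : IsNearIsometryOn ε f X)
    (hε0 : 0 ≤ ε) (hε : ε ≤ 1) (hX : IsClosed X) (hne : X.Nonempty) (hK : LipschitzWith K G)
    (huv : u ≠ v) (hu : infDist u X ≤ 2 * |u - v|) (j : Fin 3) :
    |pathLength f X u v j| * |pathAngle X G u v j - G (ofComplex ⟨u, |u - v|⟩)| ≤
        800 * K * |u - v| ∧
      |pathLength f X u v j| * (pathAngle X G u v j - G (ofComplex ⟨u, |u - v|⟩)) ^ 2 ≤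
        800 * K ^ 2 * |u - v| := by
  have hT : 0 < |u - v| := abs_pos.2 (sub_ne_zero.2 huv)
  obtain ⟨hua, hac, hcv⟩ := abs_path_steps_le hX hne hu
  obtain ⟨ha, hua'⟩ := nearestPoint_spec hX hne u
  obtain ⟨hc, hvc'⟩ := nearestPoint_spec hX hne v
  rw [Real.dist_eq] at hua'
  rw [dist_comm, Real.dist_eq] at hvc'
  have hru := abs_le_two_mul_abs_of_abs_sub_le hε
    (hf.abs_gapStretch_mul_sub_le hε0 u (u - nearestPoint X u))
  have hrac := abs_le_two_mul_abs_of_abs_sub_le hε (hf.abs_abs_slope_mul_sub_le ha hc)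
  have hrv := abs_le_two_mul_abs_of_abs_sub_le hε
    (hf.abs_gapStretch_mul_sub_le hε0 v (nearestPoint X v - v))
  rw [← hua'] at hru
  rw [← hvc'] at hrv hcv
  have huu : |u - u| ≤ 2 * |u - v| := by rw [sub_self, abs_zero]; positivity
  have hau : |nearestPoint X u - u| ≤ 2 * |u - v| := by rwa [abs_sub_comm]
  have hvu : |v - u| ≤ 2 * |u - v| := by rw [abs_sub_comm]; linarith
  fin_cases j
  · exact abs_mul_abs_angle_sub_le_and_mul_sq_le hK hT huu infDist_nonneg (by linarith) hru
  · exact abs_mul_abs_angle_sub_le_and_mul_sq_le hK hT hau (abs_nonneg _) hac hrac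
  · exact abs_mul_abs_angle_sub_le_and_mul_sq_le hK hT hvu infDist_nonneg (by linarith) hrv

lemma abs_dist_outerExtension_sub_dist_le_of_infDist_le (hf : IsNearIsometryOn ε f X)
    (hε0 : 0 ≤ ε) (hε : ε ≤ 1) (hX : IsClosed X) (hne : X.Nonempty) (hG : IsDirectionField f X G)
    (hK : LipschitzWith K G) (huv : u ≠ v) (hu : infDist u X ≤ 2 * |u - v|) :
    |dist (outerExtension f X G u) (outerExtension f X G v) - (|u - v|)| ≤
      (2881200 * K ^ 2 + 11 * ε) * |u - v| := by
  rw [dist_eq_norm, outerExtension_sub_outerExtension hX hne hG]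
  refine (abs_norm_sum_mul_exp_sub_abs_le_of_forall_le (sub_ne_zero.2 huv)
    (hf.abs_sum_pathLength_sub_le hε0 hX hne hu)
    fun j _ ↦ hf.abs_pathLength_mul_pathAngle_sub_le hε0 hε hX hne hK huv hu j).trans_eq ?_
  rw [Finset.card_univ, Fintype.card_fin]
  push_cast
  ring

lemma outerExtension_eq_add_mul_slope (hX : IsClosed X) (hne : X.Nonempty)
    (hG : IsDirectionField f X G) {y : ℝ} (hy : y ∈ X)
    (hbox : halfPlaneLift X u ∈ pairBox (nearestPoint X u) y)
    (hstretch : gapStretch f X u = |slope f (nearestPoint X u) y|) :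
    outerExtension f X G u =
      f (nearestPoint X u) + (u - nearestPoint X u) * slope f (nearestPoint X u) y := by
  rw [hG _ (nearestPoint_spec hX hne u).1 y hy _ hbox, outerExtension, hstretch]
  push_cast
  ring

lemma dist_outerExtension_of_nearestPoint_ne (hX : IsClosed X) (hne : X.Nonempty)
    (hG : IsDirectionField f X G) (huv : u < v) (hgap : Icc u v ⊆ Xᶜ)
    (hu : 2 * (v - u) ≤ infDist u X) (h : nearestPoint X u ≠ nearestPoint X v) :
    dist (outerExtension f X G u) (outerExtension f X G v) =
      |slope f (nearestPoint X u) (nearestPoint X v)| * dist u v := by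
  obtain ⟨hau, hvb, hab⟩ := Ioo_nearestPoint_subset_compl hX hne huv hgap h
  obtain ⟨ha, hua⟩ := nearestPoint_spec hX hne u
  obtain ⟨hb, hvb'⟩ := nearestPoint_spec hX hne v
  have hvu' := infDist_le_infDist_add_dist (s := X) (x := v) (y := u)
  have huv' := infDist_le_infDist_add_dist (s := X) (x := u) (y := v)
  set a := nearestPoint X u with ha_def
  set b := nearestPoint X v with hb_def
  rw [Real.dist_eq, abs_of_pos (sub_pos.2 hau)] at hua
  rw [Real.dist_eq, abs_of_neg (sub_neg.2 hvb), neg_sub] at hvb'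
  rw [Real.dist_eq, abs_of_pos (sub_pos.2 huv)] at hvu'
  rw [Real.dist_eq, abs_of_neg (sub_neg.2 huv), neg_sub] at huv'
  have hu_eq : outerExtension f X G u = f a + (u - a) * slope f a b := by
    refine outerExtension_eq_add_mul_slope hX hne hG hb ?_ ?_
    · rw [halfPlaneLift, ofComplex_mem_pairBox_iff (by linarith), ← ha_def,
        abs_of_pos (by linarith)]
      exact ⟨mem_uIcc_of_le hau.le (by linarith), by linarith, by linarith⟩
    · exact gapStretch_eq_abs_slope ha hb hab ⟨hau, huv.trans hvb⟩
  have hv_eq : outerExtension f X G v = f b + (v - b) * slope f b a := by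
    refine outerExtension_eq_add_mul_slope hX hne hG ha ?_ ?_
    · rw [halfPlaneLift, ofComplex_mem_pairBox_iff (by linarith), ← hb_def,
        abs_of_neg (by linarith)]
      exact ⟨mem_uIcc_of_ge (by linarith) hvb.le, by linarith, by linarith⟩
    · rw [← hb_def, slope_comm]
      exact gapStretch_eq_abs_slope ha hb hab ⟨hau.trans huv, hvb⟩
  have hslope : (b - a) * slope f a b = f b - f a := sub_smul_slope f a b
  have hdiff : outerExtension f X G u - outerExtension f X G v =
      (slope f a b * (u - v) : ℝ) := by
    rw [hu_eq, hv_eq, slope_comm f b a]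
    norm_cast
    linear_combination hslope
  rw [dist_eq_norm, hdiff, Complex.norm_real, Real.norm_eq_abs, abs_mul, Real.dist_eq]

lemma dist_halfPlaneLift_le (huv : u ≠ v) (hu : 2 * |u - v| ≤ infDist u X) :
    dist (halfPlaneLift X u) (halfPlaneLift X v) ≤ 4 * |u - v| / infDist v X := by
  have hT : 0 < |u - v| := abs_pos.2 (sub_ne_zero.2 huv)
  have huv' := infDist_le_infDist_add_dist (s := X) (x := u) (y := v)
  have hvu' := infDist_le_infDist_add_dist (s := X) (x := v) (y := u)
  rw [Real.dist_eq] at huv'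
  rw [dist_comm, Real.dist_eq] at hvu'
  have hu0 : 0 < infDist u X := by linarith
  have hv0 : 0 < infDist v X := by linarith
  rw [halfPlaneLift, halfPlaneLift, ofComplex_apply_of_im_pos hu0, ofComplex_apply_of_im_pos hv0]
  have heuclid : dist (⟨u, infDist u X⟩ : ℂ) ⟨v, infDist v X⟩ ≤ 2 * |u - v| := by
    rw [Complex.dist_eq]
    refine (Complex.norm_le_abs_re_add_abs_im _).trans ?_
    rw [Complex.sub_re, Complex.sub_im, two_mul]
    exact add_le_add_right (abs_le.2 ⟨by linarith, by linarith⟩) _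
  have hsqrt : infDist v X / 2 ≤ √(infDist u X * infDist v X) :=
    Real.le_sqrt_of_sq_le (by nlinarith)
  refine (dist_le_dist_coe_div_sqrt _ _).trans ?_
  calc _ ≤ 2 * |u - v| / (infDist v X / 2) := by gcongr; assumption
    _ = _ := by ring

lemma abs_mul_abs_angle_sub_le_and_mul_sq_le_of_le_infDist (hK : LipschitzWith K G) (huv : u ≠ v)
    (hu : 2 * |u - v| ≤ infDist u X) {r : ℝ} (hr : |r| ≤ 2 * infDist v X) :
    |r| * |G (halfPlaneLift X v) - G (halfPlaneLift X u)| ≤ 8 * K * |u - v| ∧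
      |r| * (G (halfPlaneLift X v) - G (halfPlaneLift X u)) ^ 2 ≤ 32 * K ^ 2 * |u - v| := by
  have hvu := infDist_le_infDist_add_dist (s := X) (x := u) (y := v)
  rw [Real.dist_eq] at hvu
  have hvT : |u - v| ≤ infDist v X := by linarith
  have hv0 : 0 < infDist v X := (abs_pos.2 (sub_ne_zero.2 huv)).trans_le hvT
  have hangle : |G (halfPlaneLift X v) - G (halfPlaneLift X u)| ≤
      K * (4 * |u - v| / infDist v X) := by
    rw [abs_sub_comm]
    exact (hK.dist_le_mul _ _).trans (by gcongr; exact dist_halfPlaneLift_le huv hu)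
  constructor
  · calc _ ≤ 2 * infDist v X * (K * (4 * |u - v| / infDist v X)) := by gcongr
      _ = 8 * K * |u - v| := by field_simp; ring
  · rw [← sq_abs (G _ - G _)]
    calc _ ≤ 2 * infDist v X * (K * (4 * |u - v| / infDist v X)) ^ 2 := by gcongr
      _ = 32 * K ^ 2 * |u - v| * (|u - v| / infDist v X) := by field_simp; ring
      _ ≤ 32 * K ^ 2 * |u - v| := mul_le_of_le_one_right (by positivity) (by rwa [div_le_one hv0])

lemma abs_dist_outerExtension_sub_dist_le_of_nearestPoint_eq (hf : IsNearIsometryOn ε f X)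
    (hε0 : 0 ≤ ε) (hε : ε ≤ 1) (hX : IsClosed X) (hne : X.Nonempty) (hK : LipschitzWith K G)
    (huv : u ≠ v) (hgap : uIcc u v ⊆ Xᶜ) (hu : 2 * |u - v| ≤ infDist u X)
    (h : nearestPoint X u = nearestPoint X v) :
    |dist (outerExtension f X G u) (outerExtension f X G v) - (|u - v|)| ≤
      (160 * K ^ 2 + ε) * |u - v| := by
  let r : Fin 2 → ℝ :=
    ![gapStretch f X u * (u - nearestPoint X v), gapStretch f X u * (nearestPoint X v - v)]
  let θ : Fin 2 → ℝ := ![G (halfPlaneLift X u), G (halfPlaneLift X v)]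
  have hdist : dist (outerExtension f X G u) (outerExtension f X G v) =
      ‖∑ j, (r j : ℂ) * Complex.exp (θ j * Complex.I)‖ := by
    rw [dist_eq_norm, outerExtension, outerExtension, h, ← gapStretch_eq_of_uIcc_subset hgap,
      Fin.sum_univ_two]
    simp only [r, θ, Matrix.cons_val]
    push_cast
    ring_nf
  have hsum : |∑ j, r j - (u - v)| ≤ ε * |u - v| := by
    simp only [Fin.sum_univ_two, r, Matrix.cons_val]
    rw [← mul_add, sub_add_sub_cancel]
    exact hf.abs_gapStretch_mul_sub_le hε0 u (u - v)
  have hterm : ∀ j, |r j| * |θ j - G (halfPlaneLift X u)| ≤ 8 * K * |u - v| ∧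
      |r j| * (θ j - G (halfPlaneLift X u)) ^ 2 ≤ 32 * K ^ 2 * |u - v| := by
    have hr := abs_le_two_mul_abs_of_abs_sub_le hε
      (hf.abs_gapStretch_mul_sub_le hε0 u (nearestPoint X v - v))
    rw [abs_sub_comm _ v, ← Real.dist_eq v, ← (nearestPoint_spec hX hne v).2] at hr
    rw [Fin.forall_fin_two]
    refine ⟨?_, abs_mul_abs_angle_sub_le_and_mul_sq_le_of_le_infDist hK huv hu hr⟩
    simp only [θ, Matrix.cons_val, sub_self, abs_zero, mul_zero, ne_eq, OfNat.ofNat_ne_zero,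
      not_false_eq_true, zero_pow]
    constructor <;> positivity
  rw [hdist]
  refine (abs_norm_sum_mul_exp_sub_abs_le_of_forall_le (sub_ne_zero.2 huv) hsum
    fun j _ ↦ hterm j).trans_eq ?_
  rw [Finset.card_univ, Fintype.card_fin]
  push_cast
  ring

theorem isNearIsometryOn_outerExtension (hf : IsNearIsometryOn ε f X) (hε0 : 0 ≤ ε) (hε : ε ≤ 1)
    (hX : IsClosed X) (hne : X.Nonempty) (hG : IsDirectionField f X G) (hK : LipschitzWith K G) :
    IsNearIsometryOn (2881200 * K ^ 2 + 11 * ε) (outerExtension f X G) univ := by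
  intro u _ v _
  wlog huv : u ≤ v generalizing u v
  · rw [dist_comm, dist_comm u]
    exact this v (mem_univ v) u (mem_univ u) (le_of_not_ge huv)
  rcases huv.eq_or_lt with rfl | huv
  · simp
  rw [Real.dist_eq u v]
  rcases le_or_gt (infDist u X) (2 * |u - v|) with hu | hu
  · exact abs_dist_outerExtension_sub_dist_le_of_infDist_le hf hε0 hε hX hne hG hK huv.ne hu
  have hgap : Icc u v ⊆ Xᶜ := fun x hx hxX ↦ by
    have := infDist_le_dist_of_mem hxX (x := u)
    rw [Real.dist_eq, abs_sub_comm, abs_of_nonneg (sub_nonneg.2 hx.1)] at this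
    linarith [abs_sub_comm u v, abs_of_pos (sub_pos.2 huv), hx.2]
  by_cases h : nearestPoint X u = nearestPoint X v
  · refine (abs_dist_outerExtension_sub_dist_le_of_nearestPoint_eq hf hε0 hε hX hne hK huv.ne
      (by rwa [uIcc_of_le huv.le]) hu.le h).trans ?_
    gcongr <;> linarith
  · rw [dist_outerExtension_of_nearestPoint_ne hX hne hG huv hgap
      (by rw [abs_sub_comm, abs_of_pos (sub_pos.2 huv)] at hu; exact hu.le) h, Real.dist_eq,
      ← sub_one_mul, abs_mul, abs_abs]
    gcongr
    refine (hf.abs_abs_slope_sub_one_le (nearestPoint_spec hX hne u).1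
      (nearestPoint_spec hX hne v).1 h).trans ?_
    nlinarith [sq_nonneg (K : ℝ)]

end OuterExtension

theorem IsNearIsometryOn.exists_outerExtension {f : ℝ → ℝ} {X : Set ℝ}
    (hf : IsNearIsometryOn ε f X) (hε0 : 0 < ε) (hε : ε ≤ 1 / 1600) :
    ∃ H : ℝ → ℂ, (∀ x ∈ X, H x = f x) ∧
      IsNearIsometryOn (2881211 * (2 * Real.pi) ^ 2 / Real.log (1 / ε) ^ 2) H univ := by
  rcases X.eq_empty_or_nonempty with rfl | hne
  · refine ⟨(↑), by simp, fun u _ v _ ↦ ?_⟩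
    rw [Complex.isometry_ofReal.dist_eq, sub_self, abs_zero]
    positivity
  obtain ⟨g, hfg, hg⟩ := hf.exists_eqOn_closure
  have hlog : 0 < Real.log (1 / ε) := Real.log_pos (by rw [one_lt_div hε0]; linarith)
  obtain ⟨G, hG, hK⟩ := exists_isDirectionField_lipschitzWith (half_pos hlog)
    fun z hz w hw ↦ hg.half_log_le_dist hε0 hε hz hw
  refine ⟨outerExtension g (closure X) G, fun x hx ↦ ?_, ?_⟩
  · rw [outerExtension_of_mem (subset_closure hx), hfg hx]
  · refine (isNearIsometryOn_outerExtension hg hε0.le (by linarith) isClosed_closure hne.closure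
      hG hK).mono ?_
    have hsmall := le_sq_two_pi_div_log hε0 (by linarith)
    have hK_eq : Real.pi / (Real.log (1 / ε) / 2) = 2 * Real.pi / Real.log (1 / ε) := by ring
    rw [Real.coe_toNNReal _ (by positivity), hK_eq, mul_div_assoc _ ((2 * Real.pi) ^ 2), ← div_pow]
    linarith

/-- **Outer extension of near-isometric maps of the line.** There are `C > 0` and
`ε₀ ∈ (0,1)` such that for every `ε ∈ (0, ε₀)`, every set `X ⊆ ℝ` and every map `f : X → ℝ`
with `(1 - ε)|x₁ - x₂| ≤ |f x₁ - f x₂| ≤ (1 + ε)|x₁ - x₂|` on `X` admits an extension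
`h : ℝ → ℝ²` with `h x = (f x, 0)` on `X` and
`(1 - C/log²(1/ε))|u - v| ≤ ‖h u - h v‖ ≤ (1 + C/log²(1/ε))|u - v|` for all `u, v ∈ ℝ`. -/
theorem line_outer_extension :
    ∃ C > (0 : ℝ), ∃ ε₀ : ℝ, 0 < ε₀ ∧ ε₀ < 1 ∧ ∀ ε : ℝ, 0 < ε → ε < ε₀ →
      ∀ (X : Set ℝ) (f : ℝ → ℝ),
        (∀ x₁ ∈ X, ∀ x₂ ∈ X,
          (1 - ε) * |x₁ - x₂| ≤ |f x₁ - f x₂| ∧ |f x₁ - f x₂| ≤ (1 + ε) * |x₁ - x₂|) →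
        ∃ h : ℝ → EuclideanSpace ℝ (Fin 2),
          (∀ x ∈ X, h x 0 = f x ∧ h x 1 = 0) ∧
          ∀ u v : ℝ,
            (1 - C / (Real.log (1 / ε)) ^ 2) * |u - v| ≤ ‖h u - h v‖ ∧
            ‖h u - h v‖ ≤ (1 + C / (Real.log (1 / ε)) ^ 2) * |u - v| := by
  refine ⟨2881211 * (2 * Real.pi) ^ 2, by positivity, 1 / 1600, by norm_num, by norm_num,
    fun ε hε0 hε X f hf ↦ ?_⟩
  obtain ⟨H, hHX, hH⟩ := (isNearIsometryOn_iff.2 hf).exists_outerExtension hε0 hε.le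
  have hiso := hH.isometry_comp Complex.orthonormalBasisOneI.repr.isometry
  refine ⟨Complex.orthonormalBasisOneI.repr ∘ H, fun x hx ↦ ?_, fun u v ↦ ?_⟩
  · simp [hHX x hx, Complex.orthonormalBasisOneI_repr_apply]
  · simpa only [dist_eq_norm, Real.norm_eq_abs] using
      isNearIsometryOn_iff.1 hiso u (mem_univ u) v (mem_univ v)
end

section
/- For every ε ∈ (0,1) there exist constants c₂, c₃ > 0 (depending only on ε) such that the following holds. For every d ≥ 1, every finite set X ⊂ ℝ^d with |X| = N, and every bijection π : {1,…,N} → X (a priority ranking), there exist d' ≤ c₃·log₂ N and an injective map f : X → ℝ^{d'} such that for every j with 4 ≤ j ≤ N: (i) the restriction of f to {π(1), …, π(j)} has distortion at most (3 + ε)·log₂ log₂ j; and (ii) all but the first ⌈c₂·(log₂ j)^{3+ε}⌉ coordinates of f(π(j)) equal 0. -/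
/-- `f` restricted to `A` has distortion at most `D`. -/
def HasDistortionAtMost {n m : ℕ} (A : Set (EuclideanSpace ℝ (Fin n)))
    (f : EuclideanSpace ℝ (Fin n) → EuclideanSpace ℝ (Fin m)) (D : ℝ) : Prop :=
  ∃ lam > (0 : ℝ), ∀ x ∈ A, ∀ y ∈ A,
    lam * ‖x - y‖ ≤ ‖f x - f y‖ ∧ ‖f x - f y‖ ≤ lam * D * ‖x - y‖

/-!
Cut the ranking into levels of doubly exponential size. Restricted to level `k`, the points embed
into `O(levelBits k)` dimensions with distortion `2` (Johnson-Lindenstrauss), and by Kirszbraun's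
theorem this embedding extends to a non-expanding map `G k` of the whole set. Concatenating the
`G k` would not make the late coordinates of early points vanish. On level `k`, however,
`G (k + 1)` is a Lipschitz function of `G k`, so Kirszbraun's theorem gives a map `u k` which agrees
with `G (k + 1)` on level `k` and whose differences are controlled by those of `G k`. The block
`G (k + 1) - u k` vanishes on level `k`, and no information is lost: up to a factor that doubles
with each block, the differences of `G (k + 1)` are recovered from those of the first `k + 2`
blocks. The resulting distortion `O(2 ^ k * k)` is eventually smaller than `3 ^ k`, which is the
order of `log log` of the size of level `k`.
-/

open Finset
open scoped BigOperators Topology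

section Kirszbraun

variable {ι κ E F : Type*} [NormedAddCommGroup E] [InnerProductSpace ℝ E]
  [NormedAddCommGroup F] [InnerProductSpace ℝ F]

theorem sum_sum_mul_norm_sub_sq [Fintype κ] {c : κ → ℝ} (hc : ∑ i, c i = 1) (v : κ → E) :
    ∑ i, ∑ j, c i * c j * ‖v i - v j‖ ^ 2
      = 2 * (∑ i, c i * ‖v i‖ ^ 2 - ‖∑ i, c i • v i‖ ^ 2) := by
  have sum_norm_sub_sq (z : E) : ∑ i, c i * ‖z - v i‖ ^ 2
      = ‖z‖ ^ 2 - 2 * inner ℝ z (∑ i, c i • v i) + ∑ i, c i * ‖v i‖ ^ 2 := by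
    simp only [norm_sub_sq_real, mul_add, mul_sub, sum_add_distrib, sum_sub_distrib, ← sum_mul,
      hc, one_mul, inner_sum, inner_smul_right, mul_sum, mul_left_comm]
  calc ∑ i, ∑ j, c i * c j * ‖v i - v j‖ ^ 2
      = ∑ i, c i * ∑ j, c j * ‖v i - v j‖ ^ 2 := by simp only [mul_sum, mul_assoc]
    _ = ∑ i, c i * ‖v i‖ ^ 2 - 2 * inner ℝ (∑ i, c i • v i) (∑ i, c i • v i)
          + ∑ i, c i * ‖v i‖ ^ 2 := by
      simp only [sum_norm_sub_sq, mul_add, mul_sub, sum_add_distrib, sum_sub_distrib, ← sum_mul,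
        hc, one_mul]
      simp only [sum_inner, real_inner_smul_left, mul_sum, mul_left_comm]
    _ = 2 * (∑ i, c i * ‖v i‖ ^ 2 - ‖∑ i, c i • v i‖ ^ 2) := by
      rw [real_inner_self_eq_norm_sq]; ring

/-- The Lagrange dual function of minimising `max i, ‖q - y i‖ ^ 2 - w i` over `q`, as a function
of the multipliers `c`; the optimal `q` is `∑ i, c i • y i`. -/
def ballDual [Fintype κ] (y : κ → F) (w c : κ → ℝ) : ℝ :=
  ∑ i, c i * (‖y i‖ ^ 2 - w i) - ‖∑ i, c i • y i‖ ^ 2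

theorem ballDual_nonpos [Fintype κ] {x : κ → E} {y : κ → F}
    (h : ∀ i j, ‖y i - y j‖ ≤ ‖x i - x j‖) (p : E) {c : κ → ℝ} (hc : c ∈ stdSimplex ℝ κ) :
    ballDual y (fun i => ‖p - x i‖ ^ 2) c ≤ 0 := by
  have hvar : ∑ i, ∑ j, c i * c j * ‖y i - y j‖ ^ 2
      ≤ ∑ i, ∑ j, c i * c j * ‖(p - x i) - (p - x j)‖ ^ 2 := by
    refine sum_le_sum fun i _ => sum_le_sum fun j _ => ?_
    have := hc.1 i
    have := hc.1 j
    rw [sub_sub_sub_cancel_left, norm_sub_rev (x j)]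
    gcongr
    exact h i j
  rw [sum_sum_mul_norm_sub_sq hc.2, sum_sum_mul_norm_sub_sq hc.2] at hvar
  simp only [ballDual, mul_sub, sum_sub_distrib]
  linarith [sq_nonneg ‖∑ i, c i • (p - x i)‖]

theorem ballDual_toward_vertex [Fintype κ] [DecidableEq κ] (y : κ → F) (w c : κ → ℝ) (i : κ)
    (t : ℝ) :
    ballDual y w ((1 - t) • c + t • Pi.single i 1) = ballDual y w c
      + t * (‖∑ j, c j • y j - y i‖ ^ 2 - w i - ballDual y w c)
      - t * (t * ‖∑ j, c j • y j - y i‖ ^ 2) := by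
  have hlin : ∑ j, ((1 - t) • c + t • Pi.single i 1 : κ → ℝ) j * (‖y j‖ ^ 2 - w j)
      = (1 - t) * ∑ j, c j * (‖y j‖ ^ 2 - w j) + t * (‖y i‖ ^ 2 - w i) := by
    simp [add_mul, sum_add_distrib, mul_assoc, ← mul_sum, Pi.single_apply]
  have hcomb : ∑ j, ((1 - t) • c + t • Pi.single i 1 : κ → ℝ) j • y j
      = ∑ j, c j • y j - t • (∑ j, c j • y j - y i) := by
    simp only [Pi.add_apply, Pi.smul_apply, smul_eq_mul, add_smul, mul_smul, sum_add_distrib,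
      ← smul_sum, Pi.single_apply, ite_smul, one_smul, zero_smul, sum_ite_eq', mem_univ, if_true]
    module
  simp only [ballDual]
  rw [hlin, hcomb]
  simp only [norm_sub_sq_real, norm_smul, Real.norm_eq_abs, mul_pow, sq_abs, inner_smul_right,
    inner_sub_right, real_inner_self_eq_norm_sq]
  ring

theorem nonpos_of_forall_le_mul {a b : ℝ} (h : ∀ t ∈ Set.Ioc (0 : ℝ) 1, a ≤ t * b) : a ≤ 0 := by
  have hlim : Filter.Tendsto (fun t : ℝ => t * b) (𝓝[>] 0) (𝓝 0) := by
    simpa using ((continuous_mul_const b).tendsto 0).mono_left nhdsWithin_le_nhds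
  exact ge_of_tendsto hlim (Filter.eventually_of_mem (Ioc_mem_nhdsGT one_pos) h)

theorem norm_sub_sq_le_of_isMaxOn_ballDual [Fintype κ] {y : κ → F} {w c : κ → ℝ}
    (hc : c ∈ stdSimplex ℝ κ) (hmax : IsMaxOn (ballDual y w) (stdSimplex ℝ κ) c) (i : κ) :
    ‖∑ j, c j • y j - y i‖ ^ 2 ≤ w i + ballDual y w c := by
  classical
  suffices ‖∑ j, c j • y j - y i‖ ^ 2 - w i - ballDual y w c ≤ 0 by linarith
  refine nonpos_of_forall_le_mul (b := ‖∑ j, c j • y j - y i‖ ^ 2) fun t ht => ?_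
  have hle : ballDual y w ((1 - t) • c + t • Pi.single i 1) ≤ ballDual y w c :=
    hmax (convex_stdSimplex ℝ κ hc (single_mem_stdSimplex ℝ i) (by linarith [ht.2]) ht.1.le
      (by ring))
  rw [ballDual_toward_vertex] at hle
  exact le_of_mul_le_mul_left (by linarith) ht.1

theorem exists_norm_sub_le_of_norm_sub_le [Finite κ] {x : κ → E} {y : κ → F}
    (h : ∀ i j, ‖y i - y j‖ ≤ ‖x i - x j‖) (p : E) : ∃ q : F, ∀ i, ‖q - y i‖ ≤ ‖p - x i‖ := by
  classical
  rcases isEmpty_or_nonempty κ with _ | ⟨⟨i₀⟩⟩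
  · exact ⟨0, isEmptyElim⟩
  have := Fintype.ofFinite κ
  have hcont : Continuous (ballDual y fun i => ‖p - x i‖ ^ 2) := by unfold ballDual; fun_prop
  obtain ⟨c, hc, hmax⟩ := (isCompact_stdSimplex ℝ κ).exists_isMaxOn
    ⟨_, single_mem_stdSimplex ℝ i₀⟩ hcont.continuousOn
  refine ⟨∑ j, c j • y j, fun i => le_of_sq_le_sq ?_ (norm_nonneg _)⟩
  linarith [norm_sub_sq_le_of_isMaxOn_ballDual hc hmax i, ballDual_nonpos h p hc]

theorem exists_eqOn_norm_sub_le_insert {x : ι → E} {y : ι → F} {s : Set ι} (hs : s.Finite)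
    (h : ∀ i ∈ s, ∀ j ∈ s, ‖y i - y j‖ ≤ ‖x i - x j‖) (a : ι) :
    ∃ z : ι → F, Set.EqOn z y s ∧
      ∀ i ∈ insert a s, ∀ j ∈ insert a s, ‖z i - z j‖ ≤ ‖x i - x j‖ := by
  classical
  by_cases ha : a ∈ s
  · exact ⟨y, Set.eqOn_refl y s, by rwa [Set.insert_eq_of_mem ha]⟩
  have := hs.to_subtype
  obtain ⟨q, hq⟩ := exists_norm_sub_le_of_norm_sub_le (κ := s) (x := fun i => x i)
    (y := fun i => y i) (fun i j => h i i.2 j j.2) (x a)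
  have hz (i : ι) (hi : i ∈ s) : Function.update y a q i = y i :=
    Function.update_of_ne (ne_of_mem_of_not_mem hi ha) q y
  refine ⟨Function.update y a q, hz, ?_⟩
  rintro i (rfl | hi) j (rfl | hj)
  · simp
  · simpa [hz j hj] using hq ⟨j, hj⟩
  · simpa [hz i hi, norm_sub_rev] using hq ⟨i, hi⟩
  · simpa [hz i hi, hz j hj] using h i hi j hj

theorem exists_eqOn_norm_sub_le [Finite ι] {x : ι → E} {y : ι → F} {s : Set ι}
    (h : ∀ i ∈ s, ∀ j ∈ s, ‖y i - y j‖ ≤ ‖x i - x j‖) :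
    ∃ z : ι → F, Set.EqOn z y s ∧ ∀ i j, ‖z i - z j‖ ≤ ‖x i - x j‖ := by
  suffices H : ∀ t : Set ι, ∃ z : ι → F, Set.EqOn z y s ∧
      ∀ i ∈ t ∪ s, ∀ j ∈ t ∪ s, ‖z i - z j‖ ≤ ‖x i - x j‖ by simpa using H Set.univ
  intro t
  induction t, t.toFinite using Set.Finite.induction_on with
  | empty => exact ⟨y, Set.eqOn_refl y s, by simpa using h⟩
  | @insert a t _ _ ih =>
    obtain ⟨z, hzy, hz⟩ := ih
    obtain ⟨z', hz'z, hz'⟩ := exists_eqOn_norm_sub_le_insert (Set.toFinite _) hz a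
    exact ⟨z', (hz'z.mono Set.subset_union_right).trans hzy, by rwa [Set.insert_union]⟩

end Kirszbraun

section JohnsonLindenstrauss

theorem sq_self_add_mul_sq_le {t s : ℝ} (ht : |t| ≤ 1 / 10) (hs₀ : 0 ≤ s) (hs₁ : s ≤ 1) :
    (t + 4 * t ^ 2 * s) ^ 2 ≤ 2 * t ^ 2 := by
  obtain ⟨hl, hu⟩ := abs_le.mp ht
  have hts_lower : -(1 / 10) ≤ t * s := by nlinarith
  have hts_upper : t * s ≤ 1 / 10 := by nlinarith
  calc (t + 4 * t ^ 2 * s) ^ 2 = t ^ 2 * (1 + 4 * (t * s)) ^ 2 := by ring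
    _ ≤ t ^ 2 * 2 := by gcongr; nlinarith
    _ = 2 * t ^ 2 := mul_comm _ _

theorem exp_mul_add_sq_add_exp_mul_sub_sq_le {t s : ℝ} (ht : |t| ≤ 1 / 10) (hs₀ : 0 ≤ s)
    (hs₁ : s ≤ 1) (c α : ℝ) :
    Real.exp ((t + 4 * t ^ 2 * s) * ((c + α) ^ 2 + s))
        + Real.exp ((t + 4 * t ^ 2 * s) * ((c - α) ^ 2 + s))
      ≤ 2 * Real.exp ((t + 4 * t ^ 2 * (α ^ 2 + s)) * (c ^ 2 + (α ^ 2 + s))) := by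
  -- Averaging out one random sign produces a `cosh`; it is absorbed by letting the parameter drift
  -- from `t + 4 * t ^ 2 * s` to `t + 4 * t ^ 2 * (α ^ 2 + s)`, where `s` is the variance so far.
  set τ := t + 4 * t ^ 2 * s with hτ
  have hτ_sq : τ ^ 2 * (c ^ 2 * α ^ 2) ≤ 2 * t ^ 2 * (c ^ 2 * α ^ 2) := by
    gcongr
    exact sq_self_add_mul_sq_le ht hs₀ hs₁
  have hexponent : τ * (c ^ 2 + α ^ 2 + s) + (2 * τ * c * α) ^ 2 / 2
      ≤ (t + 4 * t ^ 2 * (α ^ 2 + s)) * (c ^ 2 + (α ^ 2 + s)) := by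
    have : 0 ≤ 4 * t ^ 2 * α ^ 2 * (α ^ 2 + s) := by positivity
    rw [hτ] at hτ_sq ⊢
    linarith
  calc Real.exp (τ * ((c + α) ^ 2 + s)) + Real.exp (τ * ((c - α) ^ 2 + s))
      = 2 * (Real.exp (τ * (c ^ 2 + α ^ 2 + s)) * Real.cosh (2 * τ * c * α)) := by
        rw [Real.cosh_eq, mul_div_assoc', mul_div_cancel₀ _ two_ne_zero,
          mul_add (Real.exp _), ← Real.exp_add, ← Real.exp_add]
        ring_nf
    _ ≤ 2 * (Real.exp (τ * (c ^ 2 + α ^ 2 + s)) * Real.exp ((2 * τ * c * α) ^ 2 / 2)) := by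
        gcongr
        exact Real.cosh_le_exp_half_sq _
    _ ≤ 2 * Real.exp ((t + 4 * t ^ 2 * (α ^ 2 + s)) * (c ^ 2 + (α ^ 2 + s))) := by
        rw [← Real.exp_add]
        gcongr

theorem expect_fin_succ_pi {α : Type*} [Fintype α] (n : ℕ) (f : (Fin (n + 1) → α) → ℝ) :
    𝔼 σ, f σ = 𝔼 b, 𝔼 σ : Fin n → α, f (Fin.cons b σ) := by
  rw [← Finset.expect_product' univ univ (fun b (σ : Fin n → α) => f (Fin.cons b σ)),
    univ_product_univ]
  exact (Fintype.expect_equiv (Fin.consEquiv fun _ => α) _ _ fun _ => rfl).symm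

theorem expect_intUnits (f : ℤˣ → ℝ) : 𝔼 u, f u = (f 1 + f (-1)) / 2 := by
  rw [Fintype.expect_eq_sum_div_card]
  simp [show (univ : Finset ℤˣ) = {1, -1} from rfl]

theorem expect_exp_mul_sq_rademacher_le {t : ℝ} (ht : |t| ≤ 1 / 10) {n : ℕ} (a : Fin n → ℝ)
    (ha : ∑ k, a k ^ 2 ≤ 1) (c : ℝ) :
    𝔼 σ : Fin n → ℤˣ, Real.exp (t * (c + ∑ k, (σ k : ℤ) * a k) ^ 2)
      ≤ Real.exp ((t + 4 * t ^ 2 * ∑ k, a k ^ 2) * (c ^ 2 + ∑ k, a k ^ 2)) := by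
  induction n generalizing c with
  | zero => simp
  | succ n ih =>
    rw [Fin.sum_univ_succ] at ha ⊢
    set s := ∑ k : Fin n, a k.succ ^ 2
    have hs₀ : 0 ≤ s := by positivity
    have hs₁ : s ≤ 1 := by linarith [sq_nonneg (a 0)]
    rw [expect_fin_succ_pi]
    simp only [Fin.sum_univ_succ, Fin.cons_zero, Fin.cons_succ, ← add_assoc c]
    refine (expect_le_expect fun b _ => ih (fun k => a k.succ) hs₁ _).trans ?_
    rw [expect_intUnits, div_le_iff₀' two_pos]
    simpa [← sub_eq_add_neg] using exp_mul_add_sq_add_exp_mul_sub_sq_le ht hs₀ hs₁ c (a 0)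

variable {n : ℕ} (D : ℕ)

theorem expect_exp_mul_sum_sq_rademacher_le {t : ℝ} (ht : |t| ≤ 1 / 10) {a : Fin n → ℝ}
    (ha : ∑ k, a k ^ 2 = 1) :
    𝔼 M : Fin D → Fin n → ℤˣ, Real.exp (t * ∑ r, (∑ k, (M r k : ℤ) * a k) ^ 2)
      ≤ Real.exp (D * (t + 4 * t ^ 2)) := by
  have hrow := expect_exp_mul_sq_rademacher_le ht a ha.le 0
  simp only [ha, zero_add, zero_pow two_ne_zero, mul_one] at hrow
  calc 𝔼 M : Fin D → Fin n → ℤˣ, Real.exp (t * ∑ r, (∑ k, (M r k : ℤ) * a k) ^ 2)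
      = (𝔼 σ : Fin n → ℤˣ, Real.exp (t * (∑ k, (σ k : ℤ) * a k) ^ 2)) ^ D := by
        rw [Finset.expect_pow, Fintype.piFinset_univ]
        simp only [mul_sum _ _ t, Real.exp_sum]
    _ ≤ Real.exp (t + 4 * t ^ 2) ^ D :=
        pow_le_pow_left₀ (expect_nonneg fun _ _ => (Real.exp_pos _).le) hrow D
    _ = Real.exp (D * (t + 4 * t ^ 2)) := (Real.exp_nat_mul _ D).symm

/-- The Chernoff weight of the event that `q` lies outside `[D / 2, 3 * D / 2]`: a sum of two
exponentials, with parameters `±1 / 16`, which is at least `1` on that event. -/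
noncomputable def chernoffWeight (q : ℝ) : ℝ :=
  Real.exp (1 / 16 * q - 3 * D / 32) + Real.exp (-(1 / 16) * q + D / 32)

variable {D} in
theorem mem_Icc_of_chernoffWeight_lt_one {q : ℝ} (h : chernoffWeight D q < 1) :
    q ∈ Set.Icc (D / 2 : ℝ) (3 * D / 2) := by
  unfold chernoffWeight at h
  have hupper := Real.exp_lt_one_iff.mp (lt_of_add_lt_of_nonneg_left h (Real.exp_pos _).le)
  have hlower := Real.exp_lt_one_iff.mp (lt_of_add_lt_of_nonneg_right h (Real.exp_pos _).le)
  constructor <;> linarith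

theorem expect_chernoffWeight_le {a : Fin n → ℝ} (ha : ∑ k, a k ^ 2 = 1) :
    𝔼 M : Fin D → Fin n → ℤˣ, chernoffWeight D (∑ r, (∑ k, (M r k : ℤ) * a k) ^ 2)
      ≤ 2 * Real.exp (-D / 64) := by
  have hupper := expect_exp_mul_sum_sq_rademacher_le D (t := 1 / 16)
    (by rw [abs_of_pos] <;> norm_num) ha
  have hlower := expect_exp_mul_sum_sq_rademacher_le D (t := -(1 / 16))
    (by rw [abs_of_neg] <;> norm_num) ha
  simp only [chernoffWeight, sub_eq_add_neg, Real.exp_add _ (-(3 * D / 32 : ℝ)),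
    Real.exp_add _ (D / 32 : ℝ), expect_add_distrib, ← expect_mul]
  calc _ ≤ Real.exp (D * (1 / 16 + 4 * (1 / 16) ^ 2)) * Real.exp (-(3 * D / 32))
        + Real.exp (D * (-(1 / 16) + 4 * (-(1 / 16)) ^ 2)) * Real.exp (D / 32) := by gcongr
    _ = 2 * Real.exp (-D / 64) := by
        rw [← Real.exp_add, ← Real.exp_add]
        ring_nf

theorem exists_signs_sum_sq_mem_Icc {α : Type*} (P : Finset α) (a : α → Fin n → ℝ)
    (ha : ∀ p ∈ P, ∑ k, a p k ^ 2 = 1) (hD : 2 * #P * Real.exp (-D / 64) < 1) :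
    ∃ M : Fin D → Fin n → ℤˣ, ∀ p ∈ P,
      ∑ r, (∑ k, (M r k : ℤ) * a p k) ^ 2 ∈ Set.Icc (D / 2 : ℝ) (3 * D / 2) := by
  have hexpect : 𝔼 M : Fin D → Fin n → ℤˣ,
      ∑ p ∈ P, chernoffWeight D (∑ r, (∑ k, (M r k : ℤ) * a p k) ^ 2) < 1 := by
    rw [expect_sum_comm]
    refine (sum_le_card_nsmul P _ _ fun p hp => expect_chernoffWeight_le D (ha p hp)).trans_lt ?_
    rw [nsmul_eq_mul]
    linarith
  obtain ⟨M, -, hM⟩ := exists_lt_of_expect_lt univ_nonempty hexpect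
  refine ⟨M, fun p hp => mem_Icc_of_chernoffWeight_lt_one (lt_of_le_of_lt ?_ hM)⟩
  exact single_le_sum (f := fun p => chernoffWeight D (∑ r, (∑ k, (M r k : ℤ) * a p k) ^ 2))
    (fun p _ => by unfold chernoffWeight; positivity) hp

variable {D}

/-- The linear map whose matrix is the sign matrix `M` divided by `√(2 * D)`. -/
noncomputable def signMap (M : Fin D → Fin n → ℤˣ) :
    EuclideanSpace ℝ (Fin n) →ₗ[ℝ] EuclideanSpace ℝ (Fin D) :=
  (√(2 * D))⁻¹ • Matrix.toEuclideanLin (.of fun r k => ((M r k : ℤ) : ℝ))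

theorem norm_signMap_sq (M : Fin D → Fin n → ℤˣ) (v : EuclideanSpace ℝ (Fin n)) :
    ‖signMap M v‖ ^ 2 = (∑ r, (∑ k, (M r k : ℤ) * v k) ^ 2) / (2 * D) := by
  simp only [signMap, LinearMap.smul_apply, norm_smul, mul_pow, EuclideanSpace.norm_sq_eq,
    Matrix.toLpLin_apply, Matrix.mulVec, dotProduct, Matrix.of_apply, Real.norm_eq_abs, sq_abs,
    inv_pow, Real.sq_sqrt (show (0 : ℝ) ≤ 2 * D by positivity)]
  rw [div_eq_inv_mul]

theorem norm_signMap_bounds {M : Fin D → Fin n → ℤˣ} {v : EuclideanSpace ℝ (Fin n)}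
    (hD : (0 : ℝ) < D) (hv : v ≠ 0)
    (h : ∑ r, (∑ k, (M r k : ℤ) * (v k / ‖v‖)) ^ 2 ∈ Set.Icc (D / 2 : ℝ) (3 * D / 2)) :
    ‖v‖ ≤ 2 * ‖signMap M v‖ ∧ ‖signMap M v‖ ≤ ‖v‖ := by
  set q := ∑ r, (∑ k, (M r k : ℤ) * (v k / ‖v‖)) ^ 2 with hq
  have hnorm : ‖signMap M v‖ ^ 2 = ‖v‖ ^ 2 * (q / (2 * D)) := by
    have : ‖v‖ ≠ 0 := norm_ne_zero_iff.mpr hv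
    simp only [norm_signMap_sq, hq, mul_div_assoc', ← sum_div, div_pow]
    field_simp
  have hq_lower : 1 / 4 ≤ q / (2 * D) := by rw [le_div_iff₀ (by positivity)]; linarith [h.1]
  have hq_upper : q / (2 * D) ≤ 1 := by rw [div_le_one (by positivity)]; linarith [h.2]
  constructor
  · refine le_of_sq_le_sq ?_ (by positivity)
    rw [mul_pow, hnorm]
    nlinarith [sq_nonneg ‖v‖]
  · refine le_of_sq_le_sq ?_ (norm_nonneg v)
    rw [hnorm]
    exact mul_le_of_le_one_right (sq_nonneg _) hq_upper

variable (D) in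
theorem exists_linearMap_norm_le_euclideanSpace (V : Finset (EuclideanSpace ℝ (Fin n)))
    (hD : 2 * #V * Real.exp (-D / 64) < 1) :
    ∃ L : EuclideanSpace ℝ (Fin n) →ₗ[ℝ] EuclideanSpace ℝ (Fin D),
      ∀ v ∈ V, ‖v‖ ≤ 2 * ‖L v‖ ∧ ‖L v‖ ≤ ‖v‖ := by
  classical
  have hunit (v) (hv : v ∈ V.erase 0) : ∑ k, (v k / ‖v‖) ^ 2 = 1 := by
    have : ‖v‖ ^ 2 ≠ 0 := by simpa using ne_of_mem_erase hv
    simp only [div_pow, ← sum_div]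
    rw [← EuclideanSpace.real_norm_sq_eq, div_self this]
  obtain ⟨M, hM⟩ := exists_signs_sum_sq_mem_Icc D (V.erase 0) (fun v k => v k / ‖v‖) hunit
    (lt_of_le_of_lt (by gcongr; exact erase_subset 0 V) hD)
  refine ⟨signMap M, fun v hv => ?_⟩
  rcases eq_or_ne v 0 with rfl | hv₀
  · simp
  have hDpos : (0 : ℝ) < D := by
    rcases D.eq_zero_or_pos with rfl | hpos
    · have : (1 : ℝ) ≤ #V := mod_cast card_pos.mpr ⟨v, hv⟩
      norm_num at hD
      linarith
    · exact_mod_cast hpos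
  exact norm_signMap_bounds hDpos hv₀ (hM v (mem_erase.mpr ⟨hv₀, hv⟩))

variable (D) in
theorem exists_linearMap_norm_le {E : Type*} [NormedAddCommGroup E] [InnerProductSpace ℝ E]
    (V : Finset E) (hD : 2 * #V * Real.exp (-D / 64) < 1) :
    ∃ L : E →ₗ[ℝ] EuclideanSpace ℝ (Fin D), ∀ v ∈ V, ‖v‖ ≤ 2 * ‖L v‖ ∧ ‖L v‖ ≤ ‖v‖ := by
  classical
  let K := Submodule.span ℝ (V : Set E)
  let coords : E →ₗ[ℝ] EuclideanSpace ℝ (Fin (Module.finrank ℝ K)) :=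
    (stdOrthonormalBasis ℝ K).repr.toLinearMap ∘ₗ K.orthogonalProjectionOnto
  have hcoords (v) (hv : v ∈ V) : ‖coords v‖ = ‖v‖ := by
    have hvK : K.orthogonalProjectionOnto v = ⟨v, Submodule.subset_span hv⟩ :=
      K.orthogonalProjectionOnto_mem_subspace_eq_self ⟨v, Submodule.subset_span hv⟩
    simp [coords, hvK]
  obtain ⟨L, hL⟩ := exists_linearMap_norm_le_euclideanSpace D (V.image coords)
    (lt_of_le_of_lt (by gcongr; exact card_image_le) hD)
  refine ⟨L ∘ₗ coords, fun v hv => ?_⟩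
  simpa only [LinearMap.comp_apply, hcoords v hv] using hL _ (mem_image_of_mem coords hv)

end JohnsonLindenstrauss

section ResidualBlocks

variable {ι : Type*}

theorem exists_norm_sub_le_and_le_two_mul_on [Finite ι] {E : Type*} [NormedAddCommGroup E]
    [InnerProductSpace ℝ E] (x : ι → E) (S : Finset ι) (D : ℕ)
    (hD : 2 * (#S : ℝ) ^ 2 * Real.exp (-D / 64) < 1) :
    ∃ G : ι → EuclideanSpace ℝ (Fin D), (∀ i j, ‖G i - G j‖ ≤ ‖x i - x j‖) ∧
      ∀ i ∈ S, ∀ j ∈ S, ‖x i - x j‖ ≤ 2 * ‖G i - G j‖ := by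
  classical
  let V : Finset E := (S ×ˢ S).image fun p => x p.1 - x p.2
  have hV : (#V : ℝ) ≤ (#S : ℝ) ^ 2 := by
    rw [sq]
    exact_mod_cast card_image_le.trans_eq (card_product S S)
  obtain ⟨L, hL⟩ := exists_linearMap_norm_le D V (lt_of_le_of_lt (by gcongr) hD)
  have hLsub : ∀ i ∈ S, ∀ j ∈ S, ‖x i - x j‖ ≤ 2 * ‖L (x i) - L (x j)‖ ∧
      ‖L (x i) - L (x j)‖ ≤ ‖x i - x j‖ := fun i hi j hj => by
    rw [← map_sub]
    exact hL _ (mem_image_of_mem (fun p : ι × ι => x p.1 - x p.2) (mk_mem_product hi hj))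
  obtain ⟨G, hGL, hG⟩ := exists_eqOn_norm_sub_le (s := (S : Set ι)) (y := fun i => L (x i))
    fun i hi j hj => (hLsub i hi j hj).2
  refine ⟨G, hG, fun i hi j hj => ?_⟩
  rw [hGL hi, hGL hj]
  exact (hLsub i hi j hj).1

theorem exists_eqOn_norm_sub_le_two_mul [Finite ι] {E : Type*} [SeminormedAddCommGroup E]
    {m n : ℕ} {x : ι → E} {S : Finset ι}
    {G : ι → EuclideanSpace ℝ (Fin m)} {G' : ι → EuclideanSpace ℝ (Fin n)}
    (hG : ∀ i ∈ S, ∀ j ∈ S, ‖x i - x j‖ ≤ 2 * ‖G i - G j‖)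
    (hG' : ∀ i j, ‖G' i - G' j‖ ≤ ‖x i - x j‖) :
    ∃ u : ι → EuclideanSpace ℝ (Fin n), Set.EqOn u G' S ∧
      ∀ i j, ‖u i - u j‖ ≤ 2 * ‖G i - G j‖ := by
  have hnorm (i j) : ‖(2 : ℝ) • G i - (2 : ℝ) • G j‖ = 2 * ‖G i - G j‖ := by
    rw [← smul_sub, norm_smul, Real.norm_two]
  simp only [← hnorm] at hG ⊢
  exact exists_eqOn_norm_sub_le fun i hi j hj => (hG' i j).trans (hG i hi j hj)

/-- The blocks of a prioritized embedding: `G k` embeds all points with good distortion on level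
`k`, `u k` is a Lipschitz function of `G k` that agrees with `G (k + 1)` on level `k`, and
block `k + 1` is the correction `G (k + 1) - u k`, which vanishes on level `k`. -/
def residualBlock {D : ℕ → ℕ} (G : ∀ k, ι → EuclideanSpace ℝ (Fin (D k)))
    (u : ∀ k, ι → EuclideanSpace ℝ (Fin (D (k + 1)))) : ∀ k, ι → EuclideanSpace ℝ (Fin (D k))
  | 0, i => G 0 i
  | k + 1, i => G (k + 1) i - u k i

variable {D : ℕ → ℕ} {G : ∀ k, ι → EuclideanSpace ℝ (Fin (D k))}
  {u : ∀ k, ι → EuclideanSpace ℝ (Fin (D (k + 1)))}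

theorem residualBlock_succ_sub (k : ℕ) (i j : ι) :
    residualBlock G u (k + 1) i - residualBlock G u (k + 1) j
      = (G (k + 1) i - G (k + 1) j) - (u k i - u k j) :=
  sub_sub_sub_comm _ _ _ _

theorem residualBlock_eq_zero {S : ℕ → Finset ι} (hS : Monotone S)
    (hu : ∀ k, Set.EqOn (u k) (G (k + 1)) (S k)) {k l : ℕ} (hlk : l < k) {i : ι} (hi : i ∈ S l) :
    residualBlock G u k i = 0 := by
  obtain ⟨k, rfl⟩ := Nat.exists_eq_add_of_le' (Nat.one_le_of_lt hlk)
  exact sub_eq_zero.mpr (hu k (hS (Nat.le_of_lt_succ hlk) hi)).symm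

theorem norm_sub_le_mul_of_residualBlock_le
    (hu : ∀ k i j, ‖u k i - u k j‖ ≤ 2 * ‖G k i - G k j‖) {i j : ι} {R : ℝ} {k : ℕ}
    (hR : ∀ l ≤ k, ‖residualBlock G u l i - residualBlock G u l j‖ ≤ R) :
    ‖G k i - G k j‖ ≤ (2 ^ (k + 1) - 1) * R := by
  induction k with
  | zero => simpa [residualBlock, show (2 : ℝ) - 1 = 1 by norm_num] using hR 0 le_rfl
  | succ k ih =>
    have hlast := hR (k + 1) le_rfl
    rw [residualBlock_succ_sub] at hlast
    calc ‖G (k + 1) i - G (k + 1) j‖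
        ≤ ‖u k i - u k j‖ + ‖(G (k + 1) i - G (k + 1) j) - (u k i - u k j)‖ := norm_le_insert' _ _
      _ ≤ 2 * ((2 ^ (k + 1) - 1) * R) + R := by
        gcongr
        exact (hu k i j).trans (by gcongr; exact ih fun l hl => hR l (hl.trans k.le_succ))
      _ = (2 ^ (k + 1 + 1) - 1) * R := by ring

theorem norm_residualBlock_succ_sub_le {E : Type*} [SeminormedAddCommGroup E] {x : ι → E}
    (hG : ∀ k i j, ‖G k i - G k j‖ ≤ ‖x i - x j‖)
    (hu : ∀ k i j, ‖u k i - u k j‖ ≤ 2 * ‖G k i - G k j‖) (k : ℕ) (i j : ι) :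
    ‖residualBlock G u (k + 1) i - residualBlock G u (k + 1) j‖ ≤ 3 * ‖x i - x j‖ := by
  rw [residualBlock_succ_sub]
  refine (norm_sub_le _ _).trans ?_
  linarith [hG (k + 1) i j, hG k i j, hu k i j]

theorem sum_norm_residualBlock_sub_sq_le {E : Type*} [SeminormedAddCommGroup E] {x : ι → E}
    (hG : ∀ k i j, ‖G k i - G k j‖ ≤ ‖x i - x j‖)
    (hu : ∀ k i j, ‖u k i - u k j‖ ≤ 2 * ‖G k i - G k j‖) (l : ℕ) (i j : ι) :
    ∑ k ∈ range (l + 1), ‖residualBlock G u k i - residualBlock G u k j‖ ^ 2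
      ≤ ((3 * l + 1) * ‖x i - x j‖) ^ 2 := by
  rw [sum_range_succ']
  calc _ ≤ ∑ k ∈ range l, (3 * ‖x i - x j‖) ^ 2 + ‖x i - x j‖ ^ 2 := by
        gcongr with k _
        · exact norm_residualBlock_succ_sub_le hG hu k i j
        · exact hG 0 i j
    _ = (9 * l + 1) * ‖x i - x j‖ ^ 2 := by
        rw [sum_const, card_range, nsmul_eq_mul]
        ring
    _ ≤ (3 * l + 1) ^ 2 * ‖x i - x j‖ ^ 2 := by
        gcongr
        have : (l : ℝ) ≤ l ^ 2 := mod_cast Nat.le_self_pow two_ne_zero l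
        linarith
    _ = ((3 * l + 1) * ‖x i - x j‖) ^ 2 := (mul_pow _ _ 2).symm

end ResidualBlocks

section BlockConcat

variable {D : ℕ → ℕ}

/-- The concatenation of the first `m` vectors of a sequence. -/
def blockConcat (m : ℕ) (v : ∀ k, EuclideanSpace ℝ (Fin (D k))) :
    EuclideanSpace ℝ (Fin (∑ k : Fin m, D k)) :=
  WithLp.toLp 2 fun r => v (finSigmaFinEquiv.symm r).1 (finSigmaFinEquiv.symm r).2

theorem blockConcat_finSigmaFinEquiv {m : ℕ} (v : ∀ k, EuclideanSpace ℝ (Fin (D k)))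
    (s : (k : Fin m) × Fin (D k)) : blockConcat m v (finSigmaFinEquiv s) = v s.1 s.2 :=
  congrArg (fun s : (k : Fin m) × Fin (D k) => v s.1 s.2) (finSigmaFinEquiv.symm_apply_apply s)

theorem norm_blockConcat_sub_sq (m : ℕ) (v w : ∀ k, EuclideanSpace ℝ (Fin (D k))) :
    ‖blockConcat m v - blockConcat m w‖ ^ 2 = ∑ k ∈ range m, ‖v k - w k‖ ^ 2 := by
  simp only [EuclideanSpace.norm_sq_eq, blockConcat, PiLp.sub_apply]
  rw [finSigmaFinEquiv.symm.sum_comp fun s : (k : Fin m) × Fin (D k) => ‖v s.1 s.2 - w s.1 s.2‖ ^ 2,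
    Fintype.sum_sigma, Fin.sum_univ_eq_sum_range (fun k => ∑ r, ‖v k r - w k r‖ ^ 2)]

theorem norm_sub_le_norm_blockConcat_sub {k m : ℕ} (hk : k < m)
    (v w : ∀ k, EuclideanSpace ℝ (Fin (D k))) :
    ‖v k - w k‖ ≤ ‖blockConcat m v - blockConcat m w‖ := by
  refine le_of_sq_le_sq ?_ (norm_nonneg _)
  rw [norm_blockConcat_sub_sq]
  exact single_le_sum (f := fun k => ‖v k - w k‖ ^ 2) (fun _ _ => sq_nonneg _) (mem_range.mpr hk)

theorem blockConcat_apply_eq_zero {l m : ℕ} {v : ∀ k, EuclideanSpace ℝ (Fin (D k))}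
    (hv : ∀ k, l ≤ k → v k = 0) (r : Fin (∑ k : Fin m, D k)) (hr : ∑ k ∈ range l, D k ≤ r) :
    blockConcat m v r = 0 := by
  obtain ⟨⟨k, s⟩, rfl⟩ := finSigmaFinEquiv.surjective r
  have hlk : l ≤ k := by
    by_contra! hkl
    have hsum : ∑ q ∈ range (k + 1), D q ≤ ∑ q ∈ range l, D q :=
      sum_le_sum_of_subset (range_subset_range.mpr hkl)
    rw [sum_range_succ] at hsum
    rw [finSigmaFinEquiv_apply] at hr
    have hk : ∑ q : Fin k, D (Fin.castLE k.2.le q) = ∑ q ∈ range k, D q :=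
      Fin.sum_univ_eq_sum_range D k
    simp only at hr
    omega
  rw [blockConcat_finSigmaFinEquiv, hv k hlk, PiLp.zero_apply]

end BlockConcat

section PrioritizedEmbedding

/-- The indexed form of `HasDistortionAtMost`: the correspondence `x i ↦ F i`, for `i` in `A`, has
distortion at most `D`. The points `x i` may lie in any normed space and need not be distinct. -/
def HasFamilyDistortionAtMost {ι E E' : Type*} [NormedAddCommGroup E] [NormedAddCommGroup E']
    (A : Set ι) (x : ι → E) (F : ι → E') (D : ℝ) : Prop :=
  ∃ lam > (0 : ℝ), ∀ i ∈ A, ∀ j ∈ A,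
    lam * ‖x i - x j‖ ≤ ‖F i - F j‖ ∧ ‖F i - F j‖ ≤ lam * D * ‖x i - x j‖

theorem hasFamilyDistortionAtMost_of_norm_sub_le {ι E E' : Type*} [NormedAddCommGroup E]
    [NormedAddCommGroup E'] {A : Set ι} {x : ι → E} {F : ι → E'} {a b D : ℝ} (ha : 0 < a)
    (hab : a * b ≤ D) (hlower : ∀ i ∈ A, ∀ j ∈ A, ‖x i - x j‖ ≤ a * ‖F i - F j‖)
    (hupper : ∀ i ∈ A, ∀ j ∈ A, ‖F i - F j‖ ≤ b * ‖x i - x j‖) :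
    HasFamilyDistortionAtMost A x F D := by
  refine ⟨a⁻¹, inv_pos.mpr ha, fun i hi j hj => ⟨?_, (hupper i hi j hj).trans ?_⟩⟩
  · exact (inv_mul_le_iff₀ ha).mpr (hlower i hi j hj)
  · gcongr
    exact (le_inv_mul_iff₀ ha).mpr hab

namespace HasFamilyDistortionAtMost

variable {ι E E' : Type*} [NormedAddCommGroup E] [NormedAddCommGroup E'] {A : Set ι} {x : ι → E}
  {F : ι → E'} {D : ℝ}

theorem mono_set (h : HasFamilyDistortionAtMost A x F D) {B : Set ι} (hBA : B ⊆ A) :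
    HasFamilyDistortionAtMost B x F D := by
  obtain ⟨lam, hlam, hbounds⟩ := h
  exact ⟨lam, hlam, fun i hi j hj => hbounds i (hBA hi) j (hBA hj)⟩

theorem mono_right (h : HasFamilyDistortionAtMost A x F D) {D' : ℝ} (hD : D ≤ D') :
    HasFamilyDistortionAtMost A x F D' := by
  obtain ⟨lam, hlam, hbounds⟩ := h
  exact ⟨lam, hlam, fun i hi j hj => ⟨(hbounds i hi j hj).1,
    (hbounds i hi j hj).2.trans (by gcongr)⟩⟩

theorem eq_of_eq (h : HasFamilyDistortionAtMost A x F D) {i j : ι} (hi : i ∈ A) (hj : j ∈ A)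
    (hF : F i = F j) : x i = x j := by
  obtain ⟨lam, hlam, hbounds⟩ := h
  have hle := (hbounds i hi j hj).1
  rw [hF, sub_self, norm_zero] at hle
  exact sub_eq_zero.mp (norm_le_zero_iff.mp (nonpos_of_mul_nonpos_right hle hlam))

end HasFamilyDistortionAtMost

theorem HasFamilyDistortionAtMost.hasDistortionAtMost_image {ι : Type*} {m n : ℕ} {A : Set ι}
    {x : ι → EuclideanSpace ℝ (Fin m)} {F : ι → EuclideanSpace ℝ (Fin n)} {D : ℝ}
    (h : HasFamilyDistortionAtMost A x F D)
    {f : EuclideanSpace ℝ (Fin m) → EuclideanSpace ℝ (Fin n)} (hf : ∀ i, f (x i) = F i) :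
    HasDistortionAtMost (x '' A) f D := by
  obtain ⟨lam, hlam, hbounds⟩ := h
  refine ⟨lam, hlam, ?_⟩
  rintro _ ⟨i, hi, rfl⟩ _ ⟨j, hj, rfl⟩
  rw [hf, hf]
  exact hbounds i hi j hj

theorem exists_prioritized_embedding {ι E : Type*} [Finite ι] [NormedAddCommGroup E]
    [InnerProductSpace ℝ E] (x : ι → E) {S : ℕ → Finset ι} (hS : Monotone S) {D : ℕ → ℕ}
    (hD : ∀ k, 2 * (#(S k) : ℝ) ^ 2 * Real.exp (-D k / 64) < 1) (m : ℕ) :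
    ∃ F : ι → EuclideanSpace ℝ (Fin (∑ k : Fin m, D k)), ∀ l < m,
      HasFamilyDistortionAtMost (S l) x F (2 * (2 ^ (l + 1) - 1) * (3 * l + 1)) ∧
      ∀ i ∈ S l, ∀ r : Fin (∑ k : Fin m, D k), ∑ k ∈ range (l + 1), D k ≤ r → F i r = 0 := by
  choose G hG hGS using fun k => exists_norm_sub_le_and_le_two_mul_on x (S k) (D k) (hD k)
  choose u huS hu using fun k => exists_eqOn_norm_sub_le_two_mul (hGS k) (hG (k + 1))
  have hvanish {k l : ℕ} (hlk : l < k) {i} (hi : i ∈ S l) : residualBlock G u k i = 0 :=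
    residualBlock_eq_zero hS huS hlk hi
  refine ⟨fun i => blockConcat m fun k => residualBlock G u k i, fun l hl => ⟨?_, ?_⟩⟩
  · refine hasFamilyDistortionAtMost_of_norm_sub_le
      (mul_pos two_pos (sub_pos.mpr (one_lt_pow₀ one_lt_two l.succ_ne_zero))) le_rfl ?_ ?_
    · intro i hi j hj
      have hblocks := norm_sub_le_mul_of_residualBlock_le hu (i := i) (j := j) (k := l)
        fun k hk => norm_sub_le_norm_blockConcat_sub (hk.trans_lt hl)
          (fun k => residualBlock G u k i) (fun k => residualBlock G u k j)
      rw [mul_assoc]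
      exact (hGS l i hi j hj).trans (by gcongr)
    · intro i hi j hj
      refine le_of_sq_le_sq ?_ (by positivity)
      rw [norm_blockConcat_sub_sq, ← sum_subset (range_subset_range.mpr hl)]
      · exact sum_norm_residualBlock_sub_sq_le hG hu l i j
      · intro k _ hk
        have hlk : l < k := by simpa using hk
        simp [hvanish hlk hi, hvanish hlk hj]
  · exact fun i hi r hr => blockConcat_apply_eq_zero (fun k hlk => hvanish hlk hi) r hr

end PrioritizedEmbedding

section DoublyExponentialLevels

/-- Level `k` of a ranking consists of the first `2 ^ levelBits k` points. The exponent `3 ^ k`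
outgrows the distortion `2 ^ (k + 2) * (3 * k + 1)` of the first `k + 1` blocks, and tripling it
only cubes `levelBits`. -/
def levelBits (k : ℕ) : ℕ := 2 ^ (16 * 3 ^ k)

theorem levelBits_succ (k : ℕ) : levelBits (k + 1) = levelBits k ^ 3 := by
  rw [levelBits, levelBits, ← pow_mul, pow_succ, mul_assoc]

theorem two_le_levelBits (k : ℕ) : 2 ≤ levelBits k :=
  Nat.le_self_pow (by positivity) 2

theorem two_mul_levelBits_le_succ (k : ℕ) : 2 * levelBits k ≤ levelBits (k + 1) := by
  have hsq : 2 ≤ levelBits k ^ 2 :=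
    (two_le_levelBits k).trans (Nat.le_self_pow two_ne_zero _)
  rw [levelBits_succ, pow_succ]
  gcongr

theorem levelBits_strictMono : StrictMono levelBits :=
  strictMono_nat_of_lt_succ fun k => by
    linarith [two_mul_levelBits_le_succ k, two_le_levelBits k]

theorem sum_range_succ_levelBits_le (k : ℕ) :
    ∑ q ∈ range (k + 1), levelBits q ≤ 2 * levelBits k := by
  induction k with
  | zero => simpa using Nat.le_mul_of_pos_left (levelBits 0) two_pos
  | succ k ih => rw [sum_range_succ]; linarith [two_mul_levelBits_le_succ k]

/-- `k` is the level at which the first `j` points of a ranking are exhausted. -/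
def IsRankLevel (j k : ℕ) : Prop :=
  j ≤ 2 ^ levelBits k ∧ ∀ q < k, 2 ^ levelBits q < j

theorem exists_isRankLevel (j : ℕ) : ∃ k, IsRankLevel j k := by
  have h : ∃ k, j ≤ 2 ^ levelBits k :=
    ⟨j, (levelBits_strictMono.le_apply.trans_lt Nat.lt_two_pow_self).le⟩
  exact ⟨Nat.find h, Nat.find_spec h, fun q hq => not_le.mp (Nat.find_min h hq)⟩

theorem natCast_le_logb_of_two_pow_le {b : ℕ} {y : ℝ} (h : 2 ^ b ≤ y) :
    (b : ℝ) ≤ Real.logb 2 y := by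
  rw [Real.le_logb_iff_rpow_le one_lt_two (lt_of_lt_of_le (by positivity) h)]
  exact_mod_cast h

theorem one_le_logb_two {y : ℝ} (h : 2 ≤ y) : 1 ≤ Real.logb 2 y :=
  mod_cast natCast_le_logb_of_two_pow_le (b := 1) (by simpa using h)

theorem two_le_logb_two {y : ℝ} (h : 4 ≤ y) : 2 ≤ Real.logb 2 y :=
  mod_cast natCast_le_logb_of_two_pow_le (b := 2) (by linarith)

theorem two_pow_mul_le_six_mul_three_pow (k : ℕ) : 2 ^ k * (3 * k + 4) ≤ 6 * 3 ^ k := by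
  induction k with
  | zero => simp
  | succ k ih =>
    have : 2 ^ k ≤ 3 ^ k := Nat.pow_le_pow_left (by norm_num) k
    calc 2 ^ (k + 1) * (3 * (k + 1) + 4) = 2 * (2 ^ k * (3 * k + 4)) + 6 * 2 ^ k := by ring
      _ ≤ 2 * (6 * 3 ^ k) + 6 * 3 ^ k := by gcongr
      _ = 6 * 3 ^ (k + 1) := by ring

namespace IsRankLevel

variable {j k : ℕ}

theorem le_of_le {j' k' : ℕ} (h : IsRankLevel j k) (h' : IsRankLevel j' k') (hj : j ≤ j') :
    k ≤ k' := by
  by_contra! hk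
  exact absurd (h.2 k' hk) (not_lt.mpr (hj.trans h'.1))

theorem levelBits_le_logb (h : IsRankLevel j (k + 1)) : (levelBits k : ℝ) ≤ Real.logb 2 j :=
  natCast_le_logb_of_two_pow_le (mod_cast (h.2 k k.lt_succ_self).le)

theorem levelBits_le (h : IsRankLevel j k) (hj : 2 ≤ j) :
    (levelBits k : ℝ) ≤ 2 ^ 16 * Real.logb 2 j ^ 3 := by
  have hlog : 1 ≤ Real.logb 2 j := one_le_logb_two (mod_cast hj)
  cases k with
  | zero =>
    calc (levelBits 0 : ℝ) = 2 ^ 16 := by norm_num [levelBits]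
      _ ≤ 2 ^ 16 * Real.logb 2 j ^ 3 :=
        le_mul_of_one_le_right (by positivity) (one_le_pow₀ hlog)
  | succ k =>
    calc (levelBits (k + 1) : ℝ) = (levelBits k : ℝ) ^ 3 := mod_cast levelBits_succ k
      _ ≤ Real.logb 2 j ^ 3 := by gcongr; exact h.levelBits_le_logb
      _ ≤ 2 ^ 16 * Real.logb 2 j ^ 3 := le_mul_of_one_le_left (by positivity) (by norm_num)

theorem distortion_le (h : IsRankLevel j k) (hj : 4 ≤ j) :
    2 * (2 ^ (k + 1) - 1) * (3 * k + 1) ≤ 3 * Real.logb 2 (Real.logb 2 j) := by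
  cases k with
  | zero =>
    have hloglog := one_le_logb_two (two_le_logb_two (mod_cast hj : (4 : ℝ) ≤ j))
    calc (2 : ℝ) * (2 ^ (0 + 1) - 1) * (3 * (0 : ℕ) + 1) = 2 := by norm_num
      _ ≤ 3 * Real.logb 2 (Real.logb 2 j) := by linarith
  | succ k =>
    have hloglog : ((16 * 3 ^ k : ℕ) : ℝ) ≤ Real.logb 2 (Real.logb 2 j) :=
      natCast_le_logb_of_two_pow_le (by simpa [levelBits] using h.levelBits_le_logb)
    have hgrowth : (2 : ℝ) ^ k * (3 * k + 4) ≤ 6 * 3 ^ k :=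
      mod_cast two_pow_mul_le_six_mul_three_pow k
    push_cast at hloglog ⊢
    calc (2 : ℝ) * (2 ^ (k + 1 + 1) - 1) * (3 * (k + 1) + 1)
        ≤ 2 * 2 ^ (k + 1 + 1) * (3 * (k + 1) + 1) := by gcongr; exact sub_le_self _ zero_le_one
      _ = 8 * (2 ^ k * (3 * k + 4)) := by ring
      _ ≤ 3 * Real.logb 2 (Real.logb 2 j) := by linarith

end IsRankLevel

theorem two_mul_sq_two_pow_mul_exp_lt_one {b : ℕ} (hb : b ≠ 0) :
    2 * ((2 : ℝ) ^ b) ^ 2 * Real.exp (-(192 * b : ℕ) / 64) < 1 := by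
  have hexp : (8 : ℝ) < Real.exp 3 :=
    calc (8 : ℝ) = 2 ^ 3 := by norm_num
      _ < Real.exp 1 ^ 3 := by gcongr; linarith [Real.exp_one_gt_d9]
      _ = Real.exp 3 := by rw [← Real.exp_nat_mul]; norm_num
  have hbase : 8 * Real.exp (-3) < 1 := by
    rwa [Real.exp_neg, ← div_eq_mul_inv, div_lt_one (Real.exp_pos 3)]
  have htwo : (2 : ℝ) ≤ 2 ^ b := le_self_pow₀ one_le_two hb
  calc 2 * ((2 : ℝ) ^ b) ^ 2 * Real.exp (-(192 * b : ℕ) / 64)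
      ≤ 2 ^ b * (2 ^ b) ^ 2 * Real.exp (b * -3) := by
        gcongr
        push_cast
        linarith
    _ = (8 * Real.exp (-3)) ^ b := by
        rw [Real.exp_nat_mul, mul_pow, ← pow_succ', pow_right_comm]
        norm_num
    _ < 1 := pow_lt_one₀ (by positivity) hbase hb

end DoublyExponentialLevels

section RankedFamilies

theorem card_filter_val_lt_two_pow_le (N b : ℕ) :
    #{i : Fin N | (i : ℕ) < 2 ^ b} ≤ 2 ^ min b (Nat.log 2 N + 1) := by
  rw [Fin.card_filter_val_lt]
  rcases min_choice b (Nat.log 2 N + 1) with h | h <;> rw [h]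
  · exact min_le_right _ _
  · exact (min_le_left _ _).trans (Nat.lt_pow_succ_log_self one_lt_two N).le

theorem IsRankLevel.sum_min_levelBits_le {N K : ℕ} (h : IsRankLevel N K) :
    ∑ k ∈ range (K + 1), min (levelBits k) (Nat.log 2 N + 1) ≤ 3 * Nat.log 2 N + 1 := by
  cases K with
  | zero => exact (sum_range_one _).trans_le ((min_le_right _ _).trans (by omega))
  | succ K =>
    have hK : levelBits K ≤ Nat.log 2 N :=
      Nat.le_log_of_pow_le one_lt_two (h.2 K K.lt_succ_self).le
    calc ∑ k ∈ range (K + 1 + 1), min (levelBits k) (Nat.log 2 N + 1)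
        ≤ ∑ k ∈ range (K + 1), levelBits k + (Nat.log 2 N + 1) := by
          rw [sum_range_succ]
          gcongr
          · exact min_le_left _ _
          · exact min_le_right _ _
      _ ≤ 2 * levelBits K + (Nat.log 2 N + 1) := by gcongr; exact sum_range_succ_levelBits_le K
      _ ≤ 3 * Nat.log 2 N + 1 := by omega

theorem exists_prioritized_embedding_of_isRankLevel {E : Type*} [NormedAddCommGroup E]
    [InnerProductSpace ℝ E] {N : ℕ} (x : Fin N → E) :
    ∃ d' ≤ 192 * (3 * Nat.log 2 N + 1), ∃ F : Fin N → EuclideanSpace ℝ (Fin d'),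
      ∀ j ≤ N, ∀ k, IsRankLevel j k →
        HasFamilyDistortionAtMost {i : Fin N | (i : ℕ) < j} x F
          (2 * (2 ^ (k + 1) - 1) * (3 * k + 1)) ∧
        ∀ i : Fin N, (i : ℕ) < j → ∀ l : Fin d', 384 * levelBits k ≤ l → F i l = 0 := by
  obtain ⟨K, hK⟩ := exists_isRankLevel N
  let S (k : ℕ) : Finset (Fin N) := {i | (i : ℕ) < 2 ^ levelBits k}
  let bits (k : ℕ) : ℕ := min (levelBits k) (Nat.log 2 N + 1)
  have hS : Monotone S := fun k l hkl i => by
    simp only [S, mem_filter_univ]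
    exact fun hi => hi.trans_le (Nat.pow_le_pow_right two_pos (levelBits_strictMono.monotone hkl))
  have hbits (k : ℕ) : bits k ≠ 0 :=
    (lt_min (two_pos.trans_le (two_le_levelBits k)) (Nat.succ_pos _)).ne'
  obtain ⟨F, hF⟩ := exists_prioritized_embedding x hS (D := fun k => 192 * bits k)
    (fun k => lt_of_le_of_lt (by gcongr; exact_mod_cast card_filter_val_lt_two_pow_le N _)
      (two_mul_sq_two_pow_mul_exp_lt_one (hbits k))) (K + 1)
  refine ⟨_, ?_, F, fun j hj k hk => ?_⟩
  · rw [Fin.sum_univ_eq_sum_range (fun k => 192 * bits k), ← mul_sum]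
    gcongr
    exact hK.sum_min_levelBits_le
  · have hkK : k < K + 1 := Nat.lt_succ_of_le (hk.le_of_le hK hj)
    have hjS (i : Fin N) (hi : (i : ℕ) < j) : i ∈ S k := by simpa [S] using hi.trans_le hk.1
    obtain ⟨hdist, hzero⟩ := hF k hkK
    refine ⟨hdist.mono_set hjS, fun i hi l hl => hzero i (hjS i hi) l (le_trans ?_ hl)⟩
    calc ∑ q ∈ range (k + 1), 192 * bits q
        ≤ ∑ q ∈ range (k + 1), 192 * levelBits q := by gcongr; exact min_le_left _ _
      _ ≤ 384 * levelBits k := by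
        rw [← mul_sum]
        linarith [sum_range_succ_levelBits_le k]

theorem prioritized_dimension_reduction_loglog_general {E : Type*} [NormedAddCommGroup E]
    [InnerProductSpace ℝ E] {N : ℕ} (x : Fin N → E) :
    ∃ d' : ℕ, (d' : ℝ) ≤ 768 * Real.logb 2 N ∧
      ∃ F : Fin N → EuclideanSpace ℝ (Fin d'), (∀ i i', F i = F i' → x i = x i') ∧
        ∀ j, 4 ≤ j → j ≤ N →
          HasFamilyDistortionAtMost {i : Fin N | (i : ℕ) < j} x F
            (3 * Real.logb 2 (Real.logb 2 j)) ∧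
          ∀ i : Fin N, (i : ℕ) < j →
            ∀ l : Fin d', ⌈384 * 2 ^ 16 * Real.logb 2 j ^ 3⌉₊ ≤ l → F i l = 0 := by
  rcases lt_or_ge N 2 with hN | hN
  · have : Subsingleton (Fin N) := Fin.subsingleton_iff_le_one.mpr (Nat.le_of_lt_succ hN)
    refine ⟨0, ?_, 0, fun i i' _ => congrArg x (Subsingleton.elim i i'), fun j _ _ => by omega⟩
    interval_cases N <;> simp
  obtain ⟨d', hd', F, hF⟩ := exists_prioritized_embedding_of_isRankLevel x
  refine ⟨d', ?_, F, fun i i' hii' => ?_, fun j hj hjN => ?_⟩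
  · have hlog : (Nat.log 2 N : ℝ) ≤ Real.logb 2 N := mod_cast Real.natLog_le_logb N 2
    calc (d' : ℝ) ≤ 192 * (3 * Nat.log 2 N + 1) := mod_cast hd'
      _ ≤ 768 * Real.logb 2 N := by linarith [one_le_logb_two (y := N) (mod_cast hN)]
  · obtain ⟨K, hK⟩ := exists_isRankLevel N
    exact (hF N le_rfl K hK).1.eq_of_eq i.2 i'.2 hii'
  · obtain ⟨k, hk⟩ := exists_isRankLevel j
    refine ⟨(hF j hjN k hk).1.mono_right (hk.distortion_le hj), fun i hi l hl => ?_⟩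
    refine (hF j hjN k hk).2 i hi l (Nat.cast_le (α := ℝ).mp ?_)
    calc ((384 * levelBits k : ℕ) : ℝ) = 384 * levelBits k := mod_cast rfl
      _ ≤ 384 * (2 ^ 16 * Real.logb 2 j ^ 3) := by gcongr; exact hk.levelBits_le (by omega)
      _ = 384 * 2 ^ 16 * Real.logb 2 j ^ 3 := by ring
      _ ≤ l := Nat.ceil_le.mp hl

end RankedFamilies

/-- **Prioritized dimension reduction with distortion `O(log log j)`.** For every `ε ∈ (0,1)`
there are `c₂, c₃ > 0` such that for every finite `X ⊂ ℝᵈ` of size `N` with priority ranking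
`π : Fin N → X`, there is an injective `f : X → ℝ^{d'}`, `d' ≤ c₃ log₂ N`, such that for every
`4 ≤ j ≤ N`: the restriction of `f` to the first `j` points has distortion at most
`(3 + ε) log₂ log₂ j`, and all but the first `⌈c₂ (log₂ j)^{3+ε}⌉` coordinates of the image of
the rank-`j` point vanish. -/
theorem prioritized_dimension_reduction_loglog (ε : ℝ) (hε : 0 < ε) (hε1 : ε < 1) :
    ∃ c₂ > (0 : ℝ), ∃ c₃ > (0 : ℝ), ∀ d : ℕ, 1 ≤ d →
      ∀ (N : ℕ) (X : Finset (EuclideanSpace ℝ (Fin d))), X.card = N →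
      ∀ π : Fin N → EuclideanSpace ℝ (Fin d),
        Function.Injective π → Set.range π = (X : Set (EuclideanSpace ℝ (Fin d))) →
        ∃ d' : ℕ, (d' : ℝ) ≤ c₃ * Real.logb 2 N ∧
          ∃ f : EuclideanSpace ℝ (Fin d) → EuclideanSpace ℝ (Fin d'),
            Set.InjOn f (X : Set (EuclideanSpace ℝ (Fin d))) ∧
            ∀ j : ℕ, ∀ _ : 4 ≤ j, ∀ hjN : j ≤ N,
              HasDistortionAtMost (π '' {i : Fin N | (i : ℕ) < j}) f
                ((3 + ε) * Real.logb 2 (Real.logb 2 j)) ∧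
              ∀ l : Fin d', ⌈c₂ * (Real.logb 2 j) ^ ((3 : ℝ) + ε)⌉₊ ≤ (l : ℕ) →
                f (π ⟨j - 1, by omega⟩) l = 0 := by
  refine ⟨384 * 2 ^ 16, by positivity, 768, by positivity, fun d _ N X _ π hπ hX => ?_⟩
  obtain ⟨d', hd', F, hinj, hF⟩ := prioritized_dimension_reduction_loglog_general π
  have hf := hπ.extend_apply F 0
  refine ⟨d', hd', Function.extend π F 0, ?_, fun j hj hjN => ?_⟩
  · rw [← hX]
    rintro _ ⟨i, rfl⟩ _ ⟨i', rfl⟩ hii'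
    exact hinj i i' (by rwa [hf, hf] at hii')
  · have hlog : 2 ≤ Real.logb 2 j := two_le_logb_two (mod_cast hj)
    obtain ⟨hdist, hzero⟩ := hF j hj hjN
    refine ⟨(hdist.mono_right ?_).hasDistortionAtMost_image hf, fun l hl => ?_⟩
    · have := one_le_logb_two hlog
      gcongr
      exact le_add_of_nonneg_right hε.le
    · have hpow : Real.logb 2 j ^ 3 ≤ Real.logb 2 j ^ (3 + ε) := by
        rw [← Real.rpow_ofNat]
        gcongr <;> linarith
      rw [hf]
      exact hzero _ (Nat.sub_one_lt (by omega)) l ((Nat.ceil_mono (by gcongr)).trans hl)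
end

section
/- For every ε ∈ (0,1) there exists a constant c₁ > 0 (depending only on ε) such that the following holds. For every d ≥ 1, every finite set X ⊂ ℝ^d with |X| = N, every bijection π : {1,…,N} → X, and every integer k with 1 < k < log₂ log₂ log₂ N, there exist d' ≤ c₁·log₂ N and an injective map f : X → ℝ^{d'} such that: (i) f has distortion at most (3 + ε)^k on all of X; and (ii) for every j ∈ {2,…,N}, all but the first ⌈c₁·log₂ j · (log₂ N)^{1/k}⌉ coordinates of f(π(j)) equal 0. -/
/-!
Split the ranking into levels `S₀ ⊆ S₁ ⊆ … ⊆ Sₙ`, where `Sᵢ` holds the first `2 ^ (q ^ i - 1)`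
points, and embed one level at a time. Suppose `f` embeds `Sᵢ` with distortion `D`. By Kirszbraun's
theorem `f` extends to a `D`-Lipschitz map `f'` on `Sᵢ₊₁`, and `f⁻¹` extends to a 1-Lipschitz map
`g` on its image. The residual `h = id - g ∘ f'` is `(1 + D)`-Lipschitz and vanishes on `Sᵢ`, and
since `id = g ∘ f' + h`, two points cannot be close under both `f'` and `h`. Appending to `f'` a
linear Johnson–Lindenstrauss image of `h`, in `O(log #Sᵢ₊₁)` new coordinates which are zero on
`Sᵢ`, thus embeds `Sᵢ₊₁`, and weighting the two blocks by `√3` and `√(3/2)` makes the distortion at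
most `(3 + ε) D`. The choice `q ≈ (log₂ N) ^ (1 / k)` exhausts the ranking after `k` levels, and
the number of coordinates spent up to a level is of the order of its last block, that is
`O(q ^ i)`.
-/

section ConvexAlternative

open scoped Pointwise

variable {ι : Type*} [Fintype ι]

theorem exists_mem_stdSimplex_forall_pos_of_isUpperSet {K : Set (ι → ℝ)} (hupper : IsUpperSet K)
    (hconv : Convex ℝ K) (hclosed : IsClosed K) (hne : K.Nonempty) (h0 : 0 ∉ K) :
    ∃ w ∈ stdSimplex ℝ ι, ∀ z ∈ K, 0 < ∑ i, w i * z i := by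
  classical
  obtain ⟨g, u, hu, hg⟩ := geometric_hahn_banach_point_closed hconv hclosed h0
  rw [map_zero] at hu
  obtain ⟨z₀, hz₀⟩ := hne
  set v : ι → ℝ := fun i ↦ g (Pi.single i 1)
  have g_apply (z : ι → ℝ) : g z = ∑ i, v i * z i := by
    conv_lhs => rw [pi_eq_sum_univ' z, map_sum]
    exact Finset.sum_congr rfl fun i _ ↦ by rw [map_smul, smul_eq_mul, mul_comm]
  have v_nonneg (i : ι) : 0 ≤ v i := by
    by_contra! hneg
    have hmem : z₀ + Pi.single i (g z₀ / -v i) ∈ K :=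
      hupper (le_add_of_nonneg_right (Pi.single_nonneg.2
        (div_nonneg (hu.trans (hg z₀ hz₀)).le (neg_nonneg.2 hneg.le)))) hz₀
    have hval : g (z₀ + Pi.single i (g z₀ / -v i)) = 0 := by
      rw [map_add, g_apply (Pi.single i _)]
      simp only [Pi.single_apply, mul_ite, mul_zero, Finset.sum_ite_eq', Finset.mem_univ, if_true]
      rw [div_neg, mul_neg, mul_div_cancel₀ _ hneg.ne, add_neg_cancel]
    exact (hu.trans (hg _ hmem)).ne' hval
  have v_sum_pos : 0 < ∑ i, v i := by
    refine (Finset.sum_nonneg fun i _ ↦ v_nonneg i).lt_of_ne' fun hzero ↦ ?_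
    have hv0 := (Finset.sum_eq_zero_iff_of_nonneg fun i _ ↦ v_nonneg i).1 hzero
    have hz := hu.trans (hg z₀ hz₀)
    rw [g_apply, Finset.sum_eq_zero fun i hi ↦ by rw [hv0 i hi, zero_mul]] at hz
    exact hz.false
  refine ⟨fun i ↦ v i / ∑ j, v j, ⟨fun i ↦ div_nonneg (v_nonneg i) v_sum_pos.le, ?_⟩,
    fun z hz ↦ ?_⟩
  · rw [← Finset.sum_div, div_self v_sum_pos.ne']
  · simp only [div_mul_eq_mul_div, ← Finset.sum_div, ← g_apply]
    exact div_pos (hu.trans (hg z hz)) v_sum_pos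

theorem exists_forall_nonpos_of_convexOn [Nonempty ι] {F : Type*} [AddCommGroup F] [Module ℝ F]
    [TopologicalSpace F] {C : Set F} {φ : ι → F → ℝ} (hC : IsCompact C)
    (hconv : ∀ i, ConvexOn ℝ C (φ i)) (hcont : ∀ i, ContinuousOn (φ i) C)
    (h : ∀ w ∈ stdSimplex ℝ ι, ∃ b ∈ C, ∑ i, w i * φ i b ≤ 0) :
    ∃ b ∈ C, ∀ i, φ i b ≤ 0 := by
  classical
  set K : Set (ι → ℝ) := {z | ∃ b ∈ C, ∀ i, φ i b ≤ z i}
  have K_eq : K = Set.Ici 0 + (fun b i ↦ φ i b) '' C := by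
    ext z
    rw [Set.mem_add]
    constructor
    · rintro ⟨b, hb, hz⟩
      exact ⟨z - fun i ↦ φ i b, fun i ↦ sub_nonneg.2 (hz i), _, ⟨b, hb, rfl⟩, sub_add_cancel _ _⟩
    · rintro ⟨s, hs, _, ⟨b, hb, rfl⟩, rfl⟩
      exact ⟨b, hb, fun i ↦ le_add_of_nonneg_left (hs i)⟩
  have hclosed : IsClosed K :=
    K_eq ▸ isClosed_Ici.add_right_of_isCompact (hC.image_of_continuousOn (continuousOn_pi.2 hcont))
  have hKconv : Convex ℝ K := by
    rintro z ⟨b, hb, hbz⟩ z' ⟨b', hb', hbz'⟩ s t hs ht hst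
    refine ⟨s • b + t • b', (hconv (Classical.arbitrary ι)).1 hb hb' hs ht hst, fun i ↦ ?_⟩
    refine ((hconv i).2 hb hb' hs ht hst).trans ?_
    exact add_le_add (smul_le_smul_of_nonneg_left (hbz i) hs)
      (smul_le_smul_of_nonneg_left (hbz' i) ht)
  have hupper : IsUpperSet K := fun z z' hzz' ⟨b, hb, hbz⟩ ↦ ⟨b, hb, fun i ↦ (hbz i).trans (hzz' i)⟩
  have mem_K {b : F} (hb : b ∈ C) : (fun i ↦ φ i b) ∈ K := ⟨b, hb, fun _ ↦ le_rfl⟩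
  by_contra h0
  obtain ⟨b₀, hb₀, -⟩ := h _ (single_mem_stdSimplex ℝ (Classical.arbitrary ι))
  obtain ⟨w, hw, hpos⟩ :=
    exists_mem_stdSimplex_forall_pos_of_isUpperSet hupper hKconv hclosed ⟨_, mem_K hb₀⟩ h0
  obtain ⟨b, hb, hle⟩ := h w hw
  exact (hpos _ (mem_K hb)).not_ge hle

end ConvexAlternative

section Kirszbraun

open scoped NNReal

variable {E F : Type*} [NormedAddCommGroup E] [InnerProductSpace ℝ E]
  [NormedAddCommGroup F] [InnerProductSpace ℝ F]

theorem sum_sum_mul_mul_dist_sq {ι : Type*} [Fintype ι] {w : ι → ℝ} (hw : ∑ i, w i = 1)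
    (x : ι → E) (c : E) :
    ∑ i, ∑ j, w i * w j * dist (x i) (x j) ^ 2 =
      2 * (∑ i, w i * dist c (x i) ^ 2 - dist c (∑ i, w i • x i) ^ 2) := by
  set v : ι → E := fun i ↦ x i - c with hv
  have dist_pair (i j : ι) :
      w i * w j * dist (x i) (x j) ^ 2 =
        w i * ‖v i‖ ^ 2 * w j + w i * (w j * ‖v j‖ ^ 2) - 2 * inner ℝ (w i • v i) (w j • v j) := by
    rw [dist_eq_norm, ← sub_sub_sub_cancel_right (x i) (x j) c, norm_sub_sq_real,
      real_inner_smul_left, real_inner_smul_right]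
    ring
  have dist_center (i : ι) : dist c (x i) = ‖v i‖ := dist_eq_norm' c (x i)
  have dist_mean : dist c (∑ i, w i • x i) = ‖∑ i, w i • v i‖ := by
    simp only [hv, smul_sub, Finset.sum_sub_distrib, ← Finset.sum_smul, hw, one_smul,
      dist_eq_norm']
  simp only [dist_pair, dist_center, dist_mean, Finset.sum_sub_distrib, Finset.sum_add_distrib,
    ← Finset.mul_sum, ← inner_sum, ← sum_inner, real_inner_self_eq_norm_sq, ← Finset.sum_mul, hw]
  ring

theorem exists_forall_dist_le_of_dist_le {ι : Type*} [Finite ι] {x : ι → E} {y : ι → F}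
    (h : ∀ i j, dist (y i) (y j) ≤ dist (x i) (x j)) (a : E) :
    ∃ b, ∀ i, dist b (y i) ≤ dist a (x i) := by
  cases nonempty_fintype ι
  cases isEmpty_or_nonempty ι
  · exact ⟨0, isEmptyElim⟩
  have hconv := convex_convexHull ℝ (Set.range y)
  suffices ∃ b ∈ convexHull ℝ (Set.range y), ∀ i, dist b (y i) ^ 2 - dist a (x i) ^ 2 ≤ 0 by
    obtain ⟨b, -, hb⟩ := this
    exact ⟨b, fun i ↦ le_of_sq_le_sq (sub_nonpos.1 (hb i)) dist_nonneg⟩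
  refine exists_forall_nonpos_of_convexOn ((Set.finite_range y).isCompact_convexHull ℝ)
    (φ := fun i b ↦ dist b (y i) ^ 2 - dist a (x i) ^ 2) (fun i ↦ ?_) (fun i ↦ ?_) fun w hw ↦ ?_
  · exact ((convexOn_dist (y i) hconv).pow (fun _ _ ↦ dist_nonneg) 2).sub
      (concaveOn_const _ hconv)
  · exact Continuous.continuousOn (by fun_prop)
  -- At the barycentre of `y`, the weighted sum of the conditions becomes a sum over pairs.
  refine ⟨∑ i, w i • y i, ?_, ?_⟩
  · exact hconv.sum_mem (fun i _ ↦ hw.1 i) hw.2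
      fun i _ ↦ subset_convexHull ℝ _ (Set.mem_range_self i)
  have hle : ∑ i, ∑ j, w i * w j * dist (y i) (y j) ^ 2 ≤
      ∑ i, ∑ j, w i * w j * dist (x i) (x j) ^ 2 := by
    gcongr with i _ j _
    exacts [mul_nonneg (hw.1 i) (hw.1 j), h i j]
  rw [sum_sum_mul_mul_dist_sq hw.2 y (∑ i, w i • y i), sum_sum_mul_mul_dist_sq hw.2 x a,
    dist_self] at hle
  simp only [mul_sub, Finset.sum_sub_distrib]
  linarith [sq_nonneg (dist a (∑ i, w i • x i))]

theorem exists_lipschitzOnWith_update_insert [DecidableEq E] {K : ℝ≥0} {f : E → F} {s : Set E}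
    (hs : s.Finite) (hf : LipschitzOnWith K f s) {a : E} (ha : a ∉ s) :
    ∃ b, LipschitzOnWith K (Function.update f a b) (insert a s) := by
  have := hs.to_subtype
  obtain ⟨b, hb⟩ := exists_forall_dist_le_of_dist_le (x := fun i : s ↦ (K : ℝ) • (i : E))
    (y := fun i : s ↦ f i) (fun i j ↦ by
      simpa only [dist_smul₀, NNReal.norm_eq] using hf.dist_le_mul i i.2 j j.2)
    ((K : ℝ) • a)
  have dist_b {x : E} (hx : x ∈ s) : dist b (f x) ≤ K * dist a x := by
    simpa only [dist_smul₀, NNReal.norm_eq] using hb ⟨x, hx⟩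
  have update_eq {x : E} (hx : x ∈ s) : Function.update f a b x = f x :=
    Function.update_of_ne (ne_of_mem_of_not_mem hx ha) _ _
  refine ⟨b, LipschitzOnWith.of_dist_le_mul ?_⟩
  rintro x (rfl | hx) y (rfl | hy)
  · simp only [dist_self, mul_zero, le_refl]
  · rw [Function.update_self, update_eq hy]
    exact dist_b hy
  · rw [Function.update_self, update_eq hx, dist_comm, dist_comm x]
    exact dist_b hx
  · rw [update_eq hx, update_eq hy]
    exact hf.dist_le_mul x hx y hy

theorem exists_lipschitzOnWith_eqOn_of_finite {K : ℝ≥0} {f : E → F} {s t : Set E}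
    (hf : LipschitzOnWith K f s) (hst : s ⊆ t) (ht : t.Finite) :
    ∃ g, LipschitzOnWith K g t ∧ Set.EqOn g f s := by
  classical
  refine (ht.induction_to s hst (C := fun u ↦ s ⊆ u ∧ ∃ g, LipschitzOnWith K g u ∧ Set.EqOn g f s)
    ⟨subset_rfl, f, hf, fun _ _ ↦ rfl⟩ fun u hut ⟨hsu, g, hg, hgf⟩ ↦ ?_).2
  obtain ⟨a, hat, hau⟩ := Set.exists_of_ssubset hut
  obtain ⟨b, hb⟩ := exists_lipschitzOnWith_update_insert (ht.subset hut.subset) hg hau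
  refine ⟨a, ⟨hat, hau⟩, hsu.trans (Set.subset_insert a u), _, hb, fun x hx ↦ ?_⟩
  rw [Function.update_of_ne (ne_of_mem_of_not_mem (hsu hx) hau), hgf hx]

end Kirszbraun

/-- `f` does not decrease distances within `A` and increases them at most by the factor `D`: it has
distortion at most `D` on `A`, witnessed by the scale `λ = 1`. -/
def HasNormalizedDistortionAtMost {E F : Type*} [Dist E] [Dist F] (A : Set E) (f : E → F)
    (D : ℝ) : Prop :=
  ∀ x ∈ A, ∀ y ∈ A, dist x y ≤ dist (f x) (f y) ∧ dist (f x) (f y) ≤ D * dist x y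

theorem HasNormalizedDistortionAtMost.injOn {E F : Type*} [MetricSpace E] [PseudoMetricSpace F]
    {A : Set E} {f : E → F} {D : ℝ} (hf : HasNormalizedDistortionAtMost A f D) : Set.InjOn f A :=
  fun x hx y hy hxy ↦ dist_le_zero.1 ((hf x hx y hy).1.trans_eq (by rw [hxy, dist_self]))

section JohnsonLindenstrauss

open MeasureTheory ProbabilityTheory
open scoped Pointwise

theorem mgf_sq_gaussianReal {s : ℝ} (hs : s < 1 / 2) :
    mgf (fun x ↦ x ^ 2) (gaussianReal 0 1) s = (√(1 - 2 * s))⁻¹ := by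
  have integrand (x : ℝ) :
      gaussianPDFReal 0 1 x • Real.exp (s * x ^ 2) =
        (√(2 * Real.pi))⁻¹ * Real.exp (-(1 / 2 - s) * x ^ 2) := by
    rw [gaussianPDFReal, smul_eq_mul, mul_assoc, ← Real.exp_add, NNReal.coe_one, mul_one]
    ring_nf
  have hpi : 0 ≤ 2 * Real.pi := by positivity
  rw [mgf, integral_gaussianReal_eq_integral_smul one_ne_zero,
    integral_congr_ae (ae_of_all _ integrand), integral_const_mul, integral_gaussian,
    ← Real.sqrt_inv, ← Real.sqrt_mul (inv_nonneg.2 hpi), ← Real.sqrt_inv]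
  have : 1 - 2 * s ≠ 0 := by linarith
  have : 1 / 2 - s ≠ 0 := by linarith
  congr 1
  field_simp

theorem inv_sqrt_one_sub_two_mul_le_exp {s : ℝ} (hs : s ≤ 1 / 4) :
    (√(1 - 2 * s))⁻¹ ≤ Real.exp (s + 4 * s ^ 2) := by
  have hpos : 0 < 1 - 2 * s := by linarith
  have hlog : -(2 * (s + 4 * s ^ 2)) ≤ Real.log (1 - 2 * s) := by
    refine le_trans ?_ (Real.one_sub_inv_le_log_of_pos hpos)
    have hgap : 1 - (1 - 2 * s)⁻¹ - -(2 * (s + 4 * s ^ 2)) =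
        (2 * s) ^ 2 * (1 - 4 * s) / (1 - 2 * s) := by
      field_simp
      ring
    rw [← sub_nonneg, hgap]
    exact div_nonneg (mul_nonneg (sq_nonneg _) (by linarith)) hpos.le
  rw [Real.sqrt_eq_rpow, ← Real.rpow_neg hpos.le, Real.rpow_def_of_pos hpos, Real.exp_le_exp]
  linarith

section ChiSquared

variable {Ω ι : Type*} [MeasurableSpace Ω] [Fintype ι] {P : Measure Ω} {X : ι → Ω → ℝ}

theorem mgf_sum_sq_of_gaussianReal (hindep : iIndepFun X P)
    (hlaw : ∀ i, HasLaw (X i) (gaussianReal 0 1) P) {s : ℝ} (hs : s < 1 / 2) :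
    mgf (fun ω ↦ ∑ i, X i ω ^ 2) P s = (√(1 - 2 * s))⁻¹ ^ Fintype.card ι := by
  have hmgf (i : ι) : mgf (fun ω ↦ X i ω ^ 2) P s = (√(1 - 2 * s))⁻¹ := by
    rw [← mgf_sq_gaussianReal hs, ← (hlaw i).map_eq, mgf_map (hlaw i).aemeasurable
      (Continuous.aestronglyMeasurable (by fun_prop))]
    rfl
  have hsq : iIndepFun (fun i ω ↦ X i ω ^ 2) P :=
    hindep.comp (fun _ x ↦ x ^ 2) fun _ ↦ by fun_prop
  have hprod := hsq.mgf_sum₀ (t := s) (fun i ↦ (hlaw i).aemeasurable.pow_const 2) Finset.univ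
  rwa [Finset.sum_fn, Finset.prod_congr rfl fun i _ ↦ hmgf i, Finset.prod_const,
    Finset.card_univ] at hprod

theorem integrable_exp_mul_sum_sq_of_gaussianReal (hindep : iIndepFun X P)
    (hlaw : ∀ i, HasLaw (X i) (gaussianReal 0 1) P) {s : ℝ} (hs : s < 1 / 2) :
    Integrable (fun ω ↦ Real.exp (s * ∑ i, X i ω ^ 2)) P := by
  refine .of_integral_ne_zero ?_
  have hne : √(1 - 2 * s) ≠ 0 := Real.sqrt_ne_zero'.2 (by linarith)
  exact (mgf_sum_sq_of_gaussianReal hindep hlaw hs).trans_ne (pow_ne_zero _ (inv_ne_zero hne))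

theorem measureReal_le_abs_sum_sq_sub_card (hindep : iIndepFun X P)
    (hlaw : ∀ i, HasLaw (X i) (gaussianReal 0 1) P) {δ : ℝ} (hδ : 0 ≤ δ) (hδ2 : δ ≤ 2) :
    P.real {ω | Fintype.card ι * δ ≤ |∑ i, X i ω ^ 2 - Fintype.card ι|} ≤
      2 * Real.exp (-(Fintype.card ι * δ ^ 2 / 16)) := by
  have := hindep.isProbabilityMeasure
  set n : ℝ := (Fintype.card ι : ℝ)
  -- The Chernoff bound is applied with tilt `δ / 8` for the upper and `-δ / 8` for the lower tail.
  have exponent_le {s t : ℝ} (hs : |s| = δ / 8) (ht : t = n * (1 + 8 * s)) :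
      Real.exp (-s * t) * mgf (fun ω ↦ ∑ i, X i ω ^ 2) P s ≤ Real.exp (-(n * δ ^ 2 / 16)) := by
    have hs4 : s ≤ 1 / 4 := (le_abs_self s).trans (by linarith)
    have hsq : s ^ 2 = (δ / 8) ^ 2 := by rw [← hs, sq_abs]
    rw [mgf_sum_sq_of_gaussianReal hindep hlaw (by linarith)]
    grw [inv_sqrt_one_sub_two_mul_le_exp hs4]
    rw [← Real.exp_nat_mul, ← Real.exp_add, Real.exp_le_exp, ht]
    refine le_of_eq ?_
    linear_combination (-4 * n) * hsq
  have hint {s : ℝ} (hs : |s| = δ / 8) :=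
    integrable_exp_mul_sum_sq_of_gaussianReal hindep hlaw (s := s) (by linarith [le_abs_self s])
  have abs_pos_tilt : |δ / 8| = δ / 8 := abs_of_nonneg (by positivity)
  have abs_neg_tilt : |-(δ / 8)| = δ / 8 := by rw [abs_neg, abs_pos_tilt]
  have upper : P.real {ω | n * (1 + δ) ≤ ∑ i, X i ω ^ 2} ≤ Real.exp (-(n * δ ^ 2 / 16)) :=
    (measure_ge_le_exp_mul_mgf _ (by positivity) (hint abs_pos_tilt)).trans
      (exponent_le abs_pos_tilt (by ring))
  have lower : P.real {ω | ∑ i, X i ω ^ 2 ≤ n * (1 - δ)} ≤ Real.exp (-(n * δ ^ 2 / 16)) :=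
    (measure_le_le_exp_mul_mgf _ (by linarith) (hint abs_neg_tilt)).trans
      (exponent_le abs_neg_tilt (by ring))
  have hsub : {ω | n * δ ≤ |∑ i, X i ω ^ 2 - n|} ⊆
      {ω | n * (1 + δ) ≤ ∑ i, X i ω ^ 2} ∪ {ω | ∑ i, X i ω ^ 2 ≤ n * (1 - δ)} := fun ω hω ↦
    (le_abs.1 (Set.mem_ofPred.1 hω)).imp (fun h ↦ Set.mem_ofPred.2 (by linarith))
      (fun h ↦ Set.mem_ofPred.2 (by linarith))
  refine (measureReal_mono hsub).trans ((measureReal_union_le _ _).trans ?_)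
  rw [two_mul]
  exact add_le_add upper lower

end ChiSquared

section Gaussian

variable {E ι : Type*} [NormedAddCommGroup E] [InnerProductSpace ℝ E] [FiniteDimensional ℝ E]
  [Fintype ι]

theorem hasLaw_inner_stdGaussian [MeasurableSpace E] [BorelSpace E] {v : E} (hv : ‖v‖ = 1) :
    HasLaw (fun x ↦ inner ℝ v x) (gaussianReal 0 1) (stdGaussian E) where
  map_eq := by
    have := IsGaussian.map_eq_gaussianReal (μ := stdGaussian E) (innerSL ℝ v)
    rwa [integral_strongDual_stdGaussian, variance_dual_stdGaussian, innerSL_apply_norm, hv,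
      one_pow, Real.toNNReal_one] at this

theorem measureReal_abs_sum_inner_sq_sub_lt [MeasurableSpace E] [BorelSpace E] {δ : ℝ}
    (hδ : 0 ≤ δ) (hδ2 : δ ≤ 2) (v : E) :
    (Measure.pi fun _ : ι ↦ stdGaussian E).real
      {ω | Fintype.card ι * δ * ‖v‖ ^ 2 < |∑ i, inner ℝ v (ω i) ^ 2 - Fintype.card ι * ‖v‖ ^ 2|} ≤
      2 * Real.exp (-(Fintype.card ι * δ ^ 2 / 16)) := by
  rcases eq_or_ne v 0 with rfl | hv
  · simpa using Real.exp_nonneg _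
  set u : E := ‖v‖⁻¹ • v with hu
  have law (i : ι) : HasLaw (fun ω : ι → E ↦ inner ℝ u (ω i)) (gaussianReal 0 1)
      (Measure.pi fun _ : ι ↦ stdGaussian E) :=
    (hasLaw_inner_stdGaussian (norm_smul_inv_norm hv)).comp
      (measurePreserving_eval (fun _ : ι ↦ stdGaussian E) i).hasLaw
  have indep : iIndepFun (fun i (ω : ι → E) ↦ inner ℝ u (ω i))
      (Measure.pi fun _ : ι ↦ stdGaussian E) :=
    iIndepFun_pi (X := fun _ x ↦ inner ℝ u x) fun _ ↦ by fun_prop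
  refine (measureReal_mono fun ω hω ↦ ?_).trans
    (measureReal_le_abs_sum_sq_sub_card indep law hδ hδ2)
  have hv0 : ‖v‖ ≠ 0 := norm_ne_zero_iff.2 hv
  have inner_eq (i : ι) : inner ℝ v (ω i) ^ 2 = ‖v‖ ^ 2 * inner ℝ u (ω i) ^ 2 := by
    rw [← mul_pow, ← real_inner_smul_left, hu, smul_inv_smul₀ hv0]
  rw [Set.mem_ofPred, Finset.sum_congr rfl fun i _ ↦ inner_eq i, ← Finset.mul_sum,
    mul_comm (Fintype.card ι : ℝ) (‖v‖ ^ 2), ← mul_sub, abs_mul, abs_of_nonneg (sq_nonneg ‖v‖),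
    mul_comm _ (‖v‖ ^ 2)] at hω
  exact (lt_of_mul_lt_mul_left hω (sq_nonneg _)).le

end Gaussian

variable {E ι : Type*} [NormedAddCommGroup E] [InnerProductSpace ℝ E] [Fintype ι] {δ : ℝ}

theorem exists_forall_abs_sum_inner_sq_sub_le_of_finiteDimensional [FiniteDimensional ℝ E]
    (hδ : 0 ≤ δ) (hδ2 : δ ≤ 2) {V : Finset E}
    (hV : V.card * (2 * Real.exp (-(Fintype.card ι * δ ^ 2 / 16))) < 1) :
    ∃ g : ι → E, ∀ v ∈ V,
      |∑ i, inner ℝ v (g i) ^ 2 - Fintype.card ι * ‖v‖ ^ 2| ≤ Fintype.card ι * δ * ‖v‖ ^ 2 := by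
  borelize E
  set P := Measure.pi fun _ : ι ↦ stdGaussian E
  set bad : E → Set (ι → E) := fun v ↦ {g | Fintype.card ι * δ * ‖v‖ ^ 2 <
    |∑ i, inner ℝ v (g i) ^ 2 - Fintype.card ι * ‖v‖ ^ 2|}
  have union_lt : P.real (⋃ v ∈ V, bad v) < 1 :=
    calc P.real (⋃ v ∈ V, bad v) ≤ ∑ v ∈ V, P.real (bad v) := measureReal_biUnion_finset_le V bad
      _ ≤ ∑ v ∈ V, 2 * Real.exp (-(Fintype.card ι * δ ^ 2 / 16)) :=
        Finset.sum_le_sum fun v _ ↦ measureReal_abs_sum_inner_sq_sub_lt hδ hδ2 v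
      _ < 1 := by rwa [Finset.sum_const, nsmul_eq_mul]
  obtain ⟨g, hg⟩ : ∃ g, g ∉ ⋃ v ∈ V, bad v := by
    refine (Set.ne_univ_iff_exists_notMem _).1 fun huniv ↦ union_lt.ne ?_
    rw [huniv, probReal_univ]
  exact ⟨g, fun v hv ↦ not_lt.1 fun hlt ↦ hg (Set.mem_biUnion hv hlt)⟩

theorem exists_forall_abs_sum_inner_sq_sub_le (hδ : 0 ≤ δ) (hδ2 : δ ≤ 2) {V : Finset E}
    (hV : V.card * (2 * Real.exp (-(Fintype.card ι * δ ^ 2 / 16))) < 1) :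
    ∃ g : ι → E, ∀ v ∈ V,
      |∑ i, inner ℝ v (g i) ^ 2 - Fintype.card ι * ‖v‖ ^ 2| ≤ Fintype.card ι * δ * ‖v‖ ^ 2 := by
  classical
  set W := Submodule.span ℝ (V : Set E)
  set V' : Finset W := V.attach.image fun v : V ↦ ⟨v, Submodule.subset_span v.2⟩
  have hcard : (V'.card : ℝ) ≤ V.card := by
    exact_mod_cast Finset.card_image_le.trans_eq V.card_attach
  obtain ⟨g, hg⟩ := exists_forall_abs_sum_inner_sq_sub_le_of_finiteDimensional (ι := ι) (V := V')
    hδ hδ2 (lt_of_le_of_lt (by gcongr) hV)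
  exact ⟨fun i ↦ g i, fun v hv ↦ hg ⟨v, Submodule.subset_span hv⟩
    (Finset.mem_image_of_mem _ (V.mem_attach ⟨v, hv⟩))⟩

theorem exists_linearMap_abs_norm_sq_sub_le [Nonempty ι] (hδ : 0 ≤ δ) (hδ2 : δ ≤ 2) {V : Finset E}
    (hV : V.card * (2 * Real.exp (-(Fintype.card ι * δ ^ 2 / 16))) < 1) :
    ∃ A : E →ₗ[ℝ] EuclideanSpace ℝ ι, ∀ v ∈ V, |‖A v‖ ^ 2 - ‖v‖ ^ 2| ≤ δ * ‖v‖ ^ 2 := by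
  obtain ⟨g, hg⟩ := exists_forall_abs_sum_inner_sq_sub_le (ι := ι) hδ hδ2 hV
  set n : ℝ := (Fintype.card ι : ℝ)
  have hn : 0 < n := Nat.cast_pos.2 Fintype.card_pos
  set A : E →ₗ[ℝ] EuclideanSpace ℝ ι := (√n)⁻¹ •
    ((WithLp.linearEquiv 2 ℝ (ι → ℝ)).symm.toLinearMap ∘ₗ LinearMap.pi fun i ↦ innerₗ E (g i))
    with hA
  have norm_sq_eq (v : E) : ‖A v‖ ^ 2 = n⁻¹ * ∑ i, inner ℝ v (g i) ^ 2 := by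
    rw [hA, LinearMap.smul_apply, norm_smul, mul_pow, norm_inv,
      Real.norm_of_nonneg (Real.sqrt_nonneg n), inv_pow, Real.sq_sqrt hn.le,
      EuclideanSpace.real_norm_sq_eq]
    exact congrArg _ (Finset.sum_congr rfl fun i _ ↦ by rw [real_inner_comm]; rfl)
  refine ⟨A, fun v hv ↦ le_of_mul_le_mul_left ?_ hn⟩
  calc n * |‖A v‖ ^ 2 - ‖v‖ ^ 2| = |∑ i, inner ℝ v (g i) ^ 2 - n * ‖v‖ ^ 2| := by
        rw [← abs_of_pos hn, ← abs_mul, abs_of_pos hn, mul_sub, norm_sq_eq,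
          mul_inv_cancel_left₀ hn.ne']
    _ ≤ n * (δ * ‖v‖ ^ 2) := (hg v hv).trans_eq (mul_assoc _ _ _)

theorem exists_linearMap_hasNormalizedDistortionAtMost [Nonempty ι] {ε : ℝ} (hε : 0 < ε)
    {T : Finset E}
    (hT : T.card ^ 2 * (2 * Real.exp (-(Fintype.card ι * (ε / (1 + ε)) ^ 2 / 16))) < 1) :
    ∃ A : E →ₗ[ℝ] EuclideanSpace ℝ ι, HasNormalizedDistortionAtMost (T : Set E) A (1 + ε) := by
  classical
  set δ := ε / (1 + ε) with hδ
  have hδ0 : 0 ≤ δ := by positivity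
  have hδ1 : δ < 1 := (div_lt_one (by positivity)).2 (by linarith)
  have hone_sub : (1 + ε) * (1 - δ) = 1 := by rw [hδ]; field_simp; ring
  have hcard : ((T - T).card : ℝ) ≤ T.card ^ 2 := by
    exact_mod_cast Finset.card_sub_le.trans_eq (sq _).symm
  obtain ⟨A, hA⟩ := exists_linearMap_abs_norm_sq_sub_le (ι := ι) (V := T - T) hδ0
    (hδ1.le.trans one_le_two) (lt_of_le_of_lt (by gcongr) hT)
  refine ⟨√(1 + ε) • A, fun x hx y hy ↦ ?_⟩
  obtain ⟨hlow, hupp⟩ := abs_le.1 (hA (x - y) (Finset.sub_mem_sub hx hy))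
  have dist_sq_eq : dist (√(1 + ε) • A x) (√(1 + ε) • A y) ^ 2 = (1 + ε) * ‖A (x - y)‖ ^ 2 := by
    rw [dist_eq_norm, ← smul_sub, ← map_sub, norm_smul, mul_pow, Real.norm_eq_abs, sq_abs,
      Real.sq_sqrt (by positivity)]
  constructor
  · refine le_of_sq_le_sq ?_ dist_nonneg
    calc dist x y ^ 2 = (1 + ε) * ((1 - δ) * ‖x - y‖ ^ 2) := by
          rw [← mul_assoc, hone_sub, one_mul, dist_eq_norm]
      _ ≤ (1 + ε) * ‖A (x - y)‖ ^ 2 := by gcongr; linarith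
      _ = _ := dist_sq_eq.symm
  · refine le_of_sq_le_sq ?_ (by positivity)
    calc dist (√(1 + ε) • A x) (√(1 + ε) • A y) ^ 2 = (1 + ε) * ‖A (x - y)‖ ^ 2 := dist_sq_eq
      _ ≤ (1 + ε) * ((1 + ε) * ‖x - y‖ ^ 2) := by
        gcongr
        nlinarith [sq_nonneg ‖x - y‖]
      _ = ((1 + ε) * dist x y) ^ 2 := by rw [dist_eq_norm]; ring

/-- Number of target dimensions per bit of `log₂ #T` that suffices to embed a finite set `T` with
distortion `1 + ε`. -/
noncomputable def jlConst (ε : ℝ) : ℝ := 48 * ((1 + ε) / ε) ^ 2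

theorem one_le_jlConst {ε : ℝ} (hε : 0 < ε) : 1 ≤ jlConst ε := by
  have : 1 ≤ (1 + ε) / ε := (one_le_div hε).2 (by linarith)
  rw [jlConst]
  nlinarith

theorem exists_linearMap_hasNormalizedDistortionAtMost_of_card_le_rpow {ε : ℝ} (hε : 0 < ε)
    {T : Finset E} {Q : ℝ} (hQ : 1 ≤ Q) (hT : (T.card : ℝ) ≤ 2 ^ Q) {m : ℕ}
    (hm : jlConst ε * Q ≤ m) :
    ∃ A : E →ₗ[ℝ] EuclideanSpace ℝ (Fin m),
      HasNormalizedDistortionAtMost (T : Set E) A (1 + ε) := by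
  have hexponent : 3 * Q ≤ m * (ε / (1 + ε)) ^ 2 / 16 := by
    have : jlConst ε * Q * (ε / (1 + ε)) ^ 2 / 16 = 3 * Q := by
      rw [jlConst]
      field_simp
      norm_num
    rw [← this]
    gcongr
  have : Nonempty (Fin m) := Fin.pos_iff_nonempty.1 <| Nat.cast_pos.1 <|
    (mul_pos (one_pos.trans_le (one_le_jlConst hε)) (one_pos.trans_le hQ)).trans_le hm
  refine exists_linearMap_hasNormalizedDistortionAtMost hε ?_
  rw [Real.exp_neg, ← div_eq_mul_inv, ← mul_div_assoc, div_lt_one (Real.exp_pos _),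
    Fintype.card_fin]
  calc (T.card : ℝ) ^ 2 * 2 ≤ (2 ^ Q) ^ 2 * 2 ^ Q := by
        gcongr
        simpa using Real.rpow_le_rpow_of_exponent_le one_le_two hQ
    _ = 2 ^ (3 * Q) := by rw [← pow_succ, ← Real.rpow_mul_natCast zero_le_two, mul_comm]; norm_num
    _ < Real.exp 1 ^ (3 * Q) := by
        gcongr
        exact (Real.exp_one_gt_d9).trans' (by norm_num)
    _ = Real.exp (3 * Q) := Real.exp_one_rpow _
    _ ≤ _ := Real.exp_le_exp.2 hexponent

end JohnsonLindenstrauss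

section Extension

open scoped NNReal

variable {E F : Type*} [NormedAddCommGroup E] [InnerProductSpace ℝ E] {D ε : ℝ}

theorem HasNormalizedDistortionAtMost.exists_extension_residual [NormedAddCommGroup F]
    [InnerProductSpace ℝ F] {f : E → F} {S T : Set E}
    (hf : HasNormalizedDistortionAtMost S f D) (hST : S ⊆ T) (hT : T.Finite) (hD : 0 ≤ D) :
    ∃ (f' : E → F) (h : E → E), (∀ x ∈ S, f' x = f x ∧ h x = 0) ∧ ∀ x ∈ T, ∀ y ∈ T,
      dist (f' x) (f' y) ≤ D * dist x y ∧ dist x y ≤ dist (f' x) (f' y) + dist (h x) (h y) ∧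
      dist (h x) (h y) ≤ (1 + D) * dist x y := by
  lift D to ℝ≥0 using hD
  obtain ⟨f', hf'T, hf'S⟩ := exists_lipschitzOnWith_eqOn_of_finite
    (LipschitzOnWith.of_dist_le_mul fun x hx y hy ↦ (hf x hx y hy).2) hST hT
  have hleft : Set.LeftInvOn (Function.invFunOn f S) f S := hf.injOn.leftInvOn_invFunOn
  have hinv : LipschitzOnWith 1 (Function.invFunOn f S) (f '' S) := by
    refine LipschitzOnWith.of_dist_le_mul ?_
    rintro _ ⟨x, hx, rfl⟩ _ ⟨y, hy, rfl⟩
    rw [hleft hx, hleft hy, NNReal.coe_one, one_mul]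
    exact (hf x hx y hy).1
  obtain ⟨g, hgT, hgS⟩ := exists_lipschitzOnWith_eqOn_of_finite hinv
    (hf'S.image_eq ▸ Set.image_mono hST) (hT.image f')
  refine ⟨f', fun x ↦ x - g (f' x), fun x hx ↦ ⟨hf'S hx, ?_⟩, fun x hx y hy ↦ ?_⟩
  · beta_reduce
    rw [hf'S hx, hgS ⟨x, hx, rfl⟩, hleft hx, sub_self]
  have hf'xy := hf'T.dist_le_mul x hx y hy
  have hgxy := hgT.dist_le_mul _ ⟨x, hx, rfl⟩ _ ⟨y, hy, rfl⟩
  rw [NNReal.coe_one, one_mul] at hgxy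
  refine ⟨hf'xy, ?_, ?_⟩
  · calc dist x y = dist (x - g (f' x) + g (f' x)) (y - g (f' y) + g (f' y)) := by
          rw [sub_add_cancel, sub_add_cancel]
      _ ≤ dist (x - g (f' x)) (y - g (f' y)) + dist (g (f' x)) (g (f' y)) := dist_add_add_le _ _ _ _
      _ ≤ _ := by rw [add_comm]; gcongr
  · linarith [dist_sub_sub_le x (g (f' x)) y (g (f' y))]

/-- The point of `ℝ^(M + m)` with the coordinates of `u` followed by those of `w`. -/
noncomputable def euclideanAppend {M m : ℕ} (u : EuclideanSpace ℝ (Fin M))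
    (w : EuclideanSpace ℝ (Fin m)) : EuclideanSpace ℝ (Fin (M + m)) :=
  WithLp.toLp 2 (Fin.append u w)

theorem dist_euclideanAppend_sq {M m : ℕ} (u u' : EuclideanSpace ℝ (Fin M))
    (w w' : EuclideanSpace ℝ (Fin m)) :
    dist (euclideanAppend u w) (euclideanAppend u' w') ^ 2 = dist u u' ^ 2 + dist w w' ^ 2 := by
  simp only [EuclideanSpace.dist_sq_eq, euclideanAppend, Fin.sum_univ_add, Fin.append_left,
    Fin.append_right]

theorem HasNormalizedDistortionAtMost.exists_euclideanAppend {M m : ℕ} {S T : Finset E}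
    {f : E → EuclideanSpace ℝ (Fin M)} (hf : HasNormalizedDistortionAtMost (S : Set E) f D)
    (hST : S ⊆ T) (hD : 1 ≤ D) (hε : 0 < ε) {Q : ℝ} (hQ : 1 ≤ Q) (hT : (T.card : ℝ) ≤ 2 ^ Q)
    (hm : jlConst (ε / 3) * Q ≤ m) :
    ∃ g : E → EuclideanSpace ℝ (Fin (M + m)),
      HasNormalizedDistortionAtMost (T : Set E) g ((3 + ε) * D) ∧
      ∀ x ∈ S, g x = euclideanAppend (√3 • f x) 0 := by
  classical
  obtain ⟨f', h, hS, hTT⟩ := hf.exists_extension_residual hST T.finite_toSet (by linarith)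
  obtain ⟨A, hA⟩ := exists_linearMap_hasNormalizedDistortionAtMost_of_card_le_rpow
    (T := T.image h) (by positivity) hQ (le_trans (by exact_mod_cast Finset.card_image_le) hT) hm
  refine ⟨fun x ↦ euclideanAppend (√3 • f' x) (√(3 / 2) • A (h x)), fun x hx y hy ↦ ?_,
    fun x hx ↦ by simp only [hS x hx, map_zero, smul_zero]⟩
  obtain ⟨hf'le, hle_add, hhle⟩ := hTT x hx y hy
  obtain ⟨hAge, hAle⟩ := hA (h x) (by exact_mod_cast Finset.mem_image_of_mem h hx) (h y)
    (by exact_mod_cast Finset.mem_image_of_mem h hy)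
  have dist_sq_eq : dist (euclideanAppend (√3 • f' x) (√(3 / 2) • A (h x)))
      (euclideanAppend (√3 • f' y) (√(3 / 2) • A (h y))) ^ 2 =
      3 * dist (f' x) (f' y) ^ 2 + 3 / 2 * dist (A (h x)) (A (h y)) ^ 2 := by
    simp only [dist_euclideanAppend_sq, dist_smul₀, mul_pow, Real.norm_eq_abs, sq_abs]
    rw [Real.sq_sqrt (by norm_num), Real.sq_sqrt (by norm_num)]
  constructor
  · refine le_of_sq_le_sq ?_ dist_nonneg
    calc dist x y ^ 2 ≤ (dist (f' x) (f' y) + dist (h x) (h y)) ^ 2 := by gcongr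
      -- Cauchy–Schwarz, as the reciprocals of the weights `3` and `3 / 2` add up to `1`.
      _ ≤ 3 * dist (f' x) (f' y) ^ 2 + 3 / 2 * dist (h x) (h y) ^ 2 := by
        linarith [sq_nonneg (2 * dist (f' x) (f' y) - dist (h x) (h y))]
      _ ≤ _ := by rw [dist_sq_eq]; gcongr
  · refine le_of_sq_le_sq ?_ (by positivity)
    calc _ = 3 * dist (f' x) (f' y) ^ 2 + 3 / 2 * dist (A (h x)) (A (h y)) ^ 2 := dist_sq_eq
      _ ≤ 3 * (D * dist x y) ^ 2 + 3 / 2 * ((1 + ε / 3) * (2 * D * dist x y)) ^ 2 := by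
        gcongr
        exact hAle.trans (by gcongr; exact hhle.trans (by gcongr; linarith))
      _ = (9 + 4 * ε + 2 / 3 * ε ^ 2) * (D * dist x y) ^ 2 := by ring
      _ ≤ (3 + ε) ^ 2 * (D * dist x y) ^ 2 := by gcongr; nlinarith
      _ = _ := by ring

end Extension

section Iteration

variable {E : Type*} [NormedAddCommGroup E] [InnerProductSpace ℝ E] {ε : ℝ}

theorem exists_hasNormalizedDistortionAtMost_pow (hε : 0 < ε) {S : ℕ → Finset E}
    (hmono : Monotone S) (hS₀ : (S 0 : Set E).Subsingleton) {Q : ℕ → ℝ} (hQ : ∀ i, 1 ≤ Q i)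
    (hcard : ∀ i, ((S (i + 1)).card : ℝ) ≤ 2 ^ Q i) {m : ℕ → ℕ}
    (hm : ∀ i, jlConst (ε / 3) * Q i ≤ m i) (n : ℕ) :
    ∃ f : E → EuclideanSpace ℝ (Fin (∑ i ∈ Finset.range n, m i)),
      HasNormalizedDistortionAtMost (S n : Set E) f ((3 + ε) ^ n) ∧
      ∀ i ≤ n, ∀ x ∈ S i, ∀ l : Fin _, ∑ j ∈ Finset.range i, m j ≤ (l : ℕ) → f x l = 0 := by
  induction n with
  | zero =>
    refine ⟨0, fun x hx y hy ↦ ?_, fun _ _ _ _ _ _ ↦ rfl⟩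
    rw [hS₀ hx hy]
    simp only [dist_self, mul_zero, le_refl, and_self]
  | succ n ih =>
    obtain ⟨f, hf, hzero⟩ := ih
    obtain ⟨g, hg, hgS⟩ := hf.exists_euclideanAppend (hmono n.le_succ)
      (one_le_pow₀ (by linarith)) hε (hQ n) (hcard n) (hm n)
    rw [Finset.sum_range_succ]
    refine ⟨g, by rwa [pow_succ'], fun i hi x hx l hl ↦ ?_⟩
    rcases hi.eq_or_lt with rfl | hi
    · rw [Finset.sum_range_succ] at hl
      exact absurd l.2 hl.not_gt
    rw [hgS x (hmono (Nat.lt_succ_iff.1 hi) hx)]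
    refine Fin.addCases (fun l hl ↦ ?_) (fun l _ ↦ ?_) l hl
    · simpa [euclideanAppend] using hzero i (Nat.lt_succ_iff.1 hi) x hx l hl
    · simp [euclideanAppend]

end Iteration

section HighPriority

variable {α : Type*} [DecidableEq α] {N : ℕ} (π : Fin N → α)

/-- The points of rank at most `r` in the ranking `π`. The rank of `π p` is `p + 1`, as `Fin N`
counts from `0`. -/
noncomputable def highPriority (r : ℝ) : Finset α :=
  {p : Fin N | (p : ℝ) + 1 ≤ r}.toFinset.image π

theorem mem_highPriority {r : ℝ} {p : Fin N} (hp : (p : ℝ) + 1 ≤ r) : π p ∈ highPriority π r :=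
  Finset.mem_image_of_mem π (Set.mem_toFinset.2 hp)

theorem highPriority_mono : Monotone (highPriority π) := fun _ _ hrs ↦
  Finset.image_subset_image (Set.toFinset_mono fun _ hp ↦ le_trans hp hrs)

theorem card_highPriority_le {r : ℝ} (hr : 0 ≤ r) : ((highPriority π r).card : ℝ) ≤ r := by
  refine (Nat.cast_le.2 (Finset.card_image_le.trans ?_)).trans (Nat.floor_le hr)
  refine (Finset.card_le_card_of_injOn (t := Finset.range ⌊r⌋₊) (fun p : Fin N ↦ (p : ℕ))
    (fun p hp ↦ ?_) Fin.val_injective.injOn).trans_eq (Finset.card_range _)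
  have hp : (p : ℝ) + 1 ≤ r := by simpa using hp
  exact Finset.mem_coe.2 (Finset.mem_range.2 (Nat.le_floor (by exact_mod_cast hp)))

end HighPriority

section Prioritization

theorem exists_base_pow_near {L : ℝ} (hL : 1 ≤ L) {k : ℕ} (hk : k ≠ 0) :
    ∃ q : ℝ, 2 ≤ q ∧ q ≤ 3 * L ^ (1 / k : ℝ) ∧ ∃ n ≤ k, 1 + L < q ^ n ∧ q ^ n ≤ 4 * L := by
  have hL0 : 0 ≤ L := zero_le_one.trans hL
  have hroot : 1 ≤ L ^ (1 / k : ℝ) := Real.one_le_rpow hL (by positivity)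
  rcases le_or_gt 2 ((3 * L) ^ (1 / k : ℝ)) with hbig | hsmall
  · have hpow : ((3 * L) ^ (1 / k : ℝ)) ^ k = 3 * L := by
      rw [one_div, Real.rpow_inv_natCast_pow (by positivity) hk]
    have hthree : (3 : ℝ) ^ (1 / k : ℝ) ≤ 3 :=
      Real.rpow_le_self_of_one_le (by norm_num) (by rw [one_div]; exact Nat.cast_inv_le_one k)
    refine ⟨_, hbig, ?_, k, le_rfl, ?_, ?_⟩
    · rw [Real.mul_rpow zero_le_three hL0]
      gcongr
    · linarith
    · linarith
  · obtain ⟨a, ha, ha'⟩ := exists_nat_pow_near hL one_lt_two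
    refine ⟨2, le_rfl, by linarith, a + 2, ?_, ?_, ?_⟩
    · have hlt : 3 * L < 2 ^ k := by
        have := pow_lt_pow_left₀ hsmall (by positivity) hk
        rwa [one_div, Real.rpow_inv_natCast_pow (by positivity) hk] at this
      have : (2 : ℝ) ^ (a + 2) < 2 ^ (k + 1) := by
        rw [pow_add, pow_succ _ k]
        linarith
      exact Nat.lt_succ_iff.1 ((pow_lt_pow_iff_right₀ one_lt_two).1 this)
    · rw [pow_succ]
      linarith
    · rw [pow_add]
      linarith

theorem sum_range_ceil_mul_pow_sub_one_le {C q : ℝ} (hC : 1 ≤ C) (hq : 2 ≤ q) (n : ℕ) :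
    ((∑ i ∈ Finset.range n, ⌈C * (q ^ (i + 1) - 1)⌉₊ : ℕ) : ℝ) ≤ 2 * C * q ^ n := by
  induction n with
  | zero =>
    rw [Finset.sum_range_zero, Nat.cast_zero, pow_zero]
    linarith
  | succ n ih =>
    have hpow : 1 ≤ q ^ (n + 1) := one_le_pow₀ (by linarith)
    have hceil : (⌈C * (q ^ (n + 1) - 1)⌉₊ : ℝ) ≤ C * q ^ (n + 1) := by
      have := Nat.ceil_lt_add_one (mul_nonneg (zero_le_one.trans hC) (sub_nonneg.2 hpow))
      linarith
    rw [Finset.sum_range_succ, Nat.cast_add]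
    have : 2 * C * q ^ n ≤ C * q ^ (n + 1) := by
      rw [pow_succ', ← mul_assoc, mul_comm 2]
      gcongr
    linarith

variable {E : Type*} [NormedAddCommGroup E] [InnerProductSpace ℝ E] {ε : ℝ}

theorem exists_hasNormalizedDistortionAtMost_highPriority [DecidableEq E] (hε : 0 < ε) {q : ℝ}
    (hq : 2 ≤ q) {N : ℕ} (π : Fin N → E) (n : ℕ) :
    ∃ d' : ℕ, (d' : ℝ) ≤ 2 * jlConst (ε / 3) * q ^ n ∧ ∃ f : E → EuclideanSpace ℝ (Fin d'),
      HasNormalizedDistortionAtMost (highPriority π (2 ^ (q ^ n - 1)) : Set E) f ((3 + ε) ^ n) ∧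
      ∀ i ≤ n, ∀ x ∈ highPriority π (2 ^ (q ^ i - 1)), ∀ l : Fin d',
        2 * jlConst (ε / 3) * q ^ i ≤ l → f x l = 0 := by
  have hq1 : 1 ≤ q := one_le_two.trans hq
  have hC : 1 ≤ jlConst (ε / 3) := one_le_jlConst (by positivity)
  have level_mono : Monotone fun i : ℕ ↦ highPriority π (2 ^ (q ^ i - 1)) := fun i j hij ↦
    highPriority_mono π <|
      Real.rpow_le_rpow_of_exponent_le one_le_two (by gcongr)
  have level_zero : (highPriority π (2 ^ (q ^ 0 - 1)) : Set E).Subsingleton := by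
    refine fun x hx y hy ↦ Finset.card_le_one.1 ?_ x hx y hy
    have : (2 : ℝ) ^ (q ^ 0 - 1) = 1 := by rw [pow_zero, sub_self, Real.rpow_zero]
    exact_mod_cast (card_highPriority_le π (by positivity)).trans_eq this
  obtain ⟨f, hf, hzero⟩ := exists_hasNormalizedDistortionAtMost_pow hε level_mono level_zero
    (Q := fun i ↦ q ^ (i + 1) - 1) (fun i ↦ by
      have : q ≤ q ^ (i + 1) := le_self_pow₀ hq1 i.succ_ne_zero
      linarith)
    (fun i ↦ card_highPriority_le π (by positivity)) (fun i ↦ Nat.le_ceil _) n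
  refine ⟨_, sum_range_ceil_mul_pow_sub_one_le hC hq n, f, hf, fun i hi x hx l hl ↦ ?_⟩
  exact hzero i hi x hx l <| by
    exact_mod_cast (sum_range_ceil_mul_pow_sub_one_le hC hq i).trans hl

theorem exists_hasNormalizedDistortionAtMost_prioritized (hε : 0 < ε) {q : ℝ} (hq : 2 ≤ q)
    {N n : ℕ} (hN : 1 + Real.logb 2 N < q ^ n) (π : Fin N → E) :
    ∃ d' : ℕ, (d' : ℝ) ≤ 2 * jlConst (ε / 3) * q ^ n ∧ ∃ f : E → EuclideanSpace ℝ (Fin d'),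
      HasNormalizedDistortionAtMost (Set.range π) f ((3 + ε) ^ n) ∧
      ∀ p : Fin N, 1 ≤ (p : ℕ) → ∀ l : Fin d',
        4 * jlConst (ε / 3) * q * Real.logb 2 (p + 1) ≤ l → f (π p) l = 0 := by
  classical
  obtain ⟨d', hd', f, hf, hzero⟩ := exists_hasNormalizedDistortionAtMost_highPriority hε hq π n
  have mem_level {p : Fin N} {i : ℕ} (h : 1 + Real.logb 2 (p + 1) ≤ q ^ i) :
      π p ∈ highPriority π (2 ^ (q ^ i - 1)) :=
    mem_highPriority π
      ((Real.logb_le_iff_le_rpow one_lt_two (by positivity)).1 (le_sub_iff_add_le'.2 h))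
  have rank_lt (p : Fin N) : 1 + Real.logb 2 (p + 1) < q ^ n := hN.trans_le' <| by
    gcongr
    · norm_num
    · exact_mod_cast p.2
  refine ⟨d', hd', f, ?_, fun p hp l hl ↦ ?_⟩
  · rintro _ ⟨p, rfl⟩ _ ⟨p', rfl⟩
    exact hf _ (mem_level (rank_lt p).le) _ (mem_level (rank_lt p').le)
  have hlog : 1 ≤ Real.logb 2 (p + 1) := by
    rw [Real.le_logb_iff_rpow_le one_lt_two (by positivity), Real.rpow_one]
    exact_mod_cast Nat.succ_le_succ hp
  obtain ⟨i, hi, hi'⟩ := exists_nat_pow_near (x := 1 + Real.logb 2 (p + 1)) (by linarith)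
    (one_lt_two.trans_le hq)
  have hin : i < n := (pow_lt_pow_iff_right₀ (one_lt_two.trans_le hq)).1 (hi.trans_lt (rank_lt p))
  have hC : 1 ≤ jlConst (ε / 3) := one_le_jlConst (by positivity)
  refine hzero (i + 1) hin _ (mem_level hi'.le) l ?_
  calc 2 * jlConst (ε / 3) * q ^ (i + 1) = 2 * jlConst (ε / 3) * q * q ^ i := by ring
    _ ≤ 2 * jlConst (ε / 3) * q * (2 * Real.logb 2 (p + 1)) := by gcongr; linarith
    _ = 4 * jlConst (ε / 3) * q * Real.logb 2 (p + 1) := by ring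
    _ ≤ l := hl

end Prioritization

universe u

theorem prioritized_dimension_reduction_const_distortion_general {ε : ℝ} (hε : 0 < ε) :
    ∃ c > (0 : ℝ), ∀ (E : Type u) [NormedAddCommGroup E] [InnerProductSpace ℝ E] (N : ℕ), 2 ≤ N →
      ∀ (π : Fin N → E) (k : ℕ), k ≠ 0 →
        ∃ d' : ℕ, (d' : ℝ) ≤ c * Real.logb 2 N ∧ ∃ f : E → EuclideanSpace ℝ (Fin d'),
          HasNormalizedDistortionAtMost (Set.range π) f ((3 + ε) ^ k) ∧
          ∀ p : Fin N, 1 ≤ (p : ℕ) → ∀ l : Fin d',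
            ⌈c * Real.logb 2 (p + 1) * Real.logb 2 N ^ ((1 : ℝ) / k)⌉₊ ≤ (l : ℕ) →
            f (π p) l = 0 := by
  have hC : 1 ≤ jlConst (ε / 3) := one_le_jlConst (by positivity)
  refine ⟨12 * jlConst (ε / 3), by positivity, fun E _ _ N hN π k hk ↦ ?_⟩
  have hL : 1 ≤ Real.logb 2 N := by
    rw [Real.le_logb_iff_rpow_le one_lt_two (by positivity), Real.rpow_one]
    exact_mod_cast hN
  obtain ⟨q, hq, hqle, n, hnk, hNq, hqN⟩ := exists_base_pow_near hL hk
  obtain ⟨d', hd', f, hf, hzero⟩ := exists_hasNormalizedDistortionAtMost_prioritized hε hq hNq π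
  refine ⟨d', ?_, f, fun x hx y hy ↦ ⟨(hf x hx y hy).1, (hf x hx y hy).2.trans ?_⟩,
    fun p hp l hl ↦ hzero p hp l ((Nat.ceil_le.1 hl).trans' ?_)⟩
  · calc (d' : ℝ) ≤ 2 * jlConst (ε / 3) * q ^ n := hd'
      _ ≤ 3 * jlConst (ε / 3) * (4 * Real.logb 2 N) := by gcongr; norm_num
      _ = _ := by ring
  · gcongr
    linarith
  · have : 0 ≤ Real.logb 2 (p + 1) :=
      Real.logb_nonneg one_lt_two (le_add_of_nonneg_left (Nat.cast_nonneg _))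
    calc 4 * jlConst (ε / 3) * q * Real.logb 2 (p + 1)
        ≤ 4 * jlConst (ε / 3) * (3 * Real.logb 2 N ^ ((1 : ℝ) / k)) * Real.logb 2 (p + 1) := by
          gcongr
      _ = _ := by ring

/-- **Prioritized dimension reduction with constant distortion.** For every `ε ∈ (0,1)` there
is `c₁ > 0` such that for every finite `X ⊂ ℝᵈ` of size `N` with priority ranking
`π : Fin N → X` and every integer `1 < k < log₂ log₂ log₂ N`, there is an injective
`f : X → ℝ^{d'}`, `d' ≤ c₁ log₂ N`, with distortion at most `(3 + ε)^k` on `X`, such that for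
every `2 ≤ j ≤ N` all but the first `⌈c₁ log₂ j (log₂ N)^{1/k}⌉` coordinates of the image of
the rank-`j` point vanish. -/
theorem prioritized_dimension_reduction_const_distortion (ε : ℝ) (hε : 0 < ε) (hε1 : ε < 1) :
    ∃ c₁ > (0 : ℝ), ∀ d : ℕ, 1 ≤ d →
      ∀ (N : ℕ) (X : Finset (EuclideanSpace ℝ (Fin d))), X.card = N →
      ∀ π : Fin N → EuclideanSpace ℝ (Fin d),
        Function.Injective π → Set.range π = (X : Set (EuclideanSpace ℝ (Fin d))) →
        ∀ k : ℕ, 1 < k → (k : ℝ) < Real.logb 2 (Real.logb 2 (Real.logb 2 N)) →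
        ∃ d' : ℕ, (d' : ℝ) ≤ c₁ * Real.logb 2 N ∧
          ∃ f : EuclideanSpace ℝ (Fin d) → EuclideanSpace ℝ (Fin d'),
            Set.InjOn f (X : Set (EuclideanSpace ℝ (Fin d))) ∧
            HasDistortionAtMost (X : Set (EuclideanSpace ℝ (Fin d))) f ((3 + ε) ^ k) ∧
            ∀ j : ℕ, ∀ _ : 2 ≤ j, ∀ hjN : j ≤ N,
              ∀ l : Fin d',
                ⌈c₁ * Real.logb 2 j * (Real.logb 2 N) ^ ((1 : ℝ) / k)⌉₊ ≤ (l : ℕ) →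
                f (π ⟨j - 1, by omega⟩) l = 0 := by
  obtain ⟨c, hc, h⟩ := prioritized_dimension_reduction_const_distortion_general hε
  refine ⟨c, hc, fun d _ N X _ π _ hX k hk1 hk ↦ ?_⟩
  have hN : 2 ≤ N := by
    by_contra! hlt
    interval_cases N <;> norm_num at hk <;> linarith [k.cast_nonneg (α := ℝ)]
  obtain ⟨d', hd', f, hf, hzero⟩ := h _ N hN π k (Nat.ne_zero_of_lt hk1)
  rw [hX] at hf
  refine ⟨d', hd', f, hf.injOn, ⟨1, one_pos, fun x hx y hy ↦ ?_⟩, fun j hj hjN l hl ↦ ?_⟩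
  · simpa only [one_mul, dist_eq_norm] using hf x hx y hy
  · refine hzero ⟨j - 1, by omega⟩ (Nat.le_sub_one_of_lt hj) l (le_trans (le_of_eq ?_) hl)
    rw [Nat.cast_pred (by omega), sub_add_cancel]
end
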